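/- For a TS-module M of finite length the following are equivalent: (1) M is perfect, i.e. M^{T,χ} = 0 for all smooth characters χ of T; (2) M^S = 0; (3) dim M_{T,χ} = deg(M) for all smooth characters χ of T. -/

import Mathlib

noncomputable section

open scoped Classical

namespace PSW

/-! ### The affine group `λ.b : x ↦ λ·x + b` over a field `K`. -/

@[ext]
structure Aff (K : Type*) [Field K] where
  t : Kˣ
  s : K

namespace Aff

variable {K : Type*} [Field K]

instance : Mul (Aff K) := ⟨fun g h => ⟨g.t * h.t, g.s + (g.t : K) * h.s⟩⟩
instance : One (Aff K) := ⟨⟨1, 0⟩⟩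
instance : Inv (Aff K) := ⟨fun g => ⟨g.t⁻¹, -(((g.t⁻¹ : Kˣ) : K) * g.s)⟩⟩

@[simp] lemma mul_t (g h : Aff K) : (g * h).t = g.t * h.t := rfl
@[simp] lemma mul_s (g h : Aff K) : (g * h).s = g.s + (g.t : K) * h.s := rfl
@[simp] lemma one_t : (1 : Aff K).t = 1 := rfl
@[simp] lemma one_s : (1 : Aff K).s = 0 := rfl
@[simp] lemma inv_t (g : Aff K) : (g⁻¹).t = g.t⁻¹ := rfl
@[simp] lemma inv_s (g : Aff K) : (g⁻¹).s = -(((g.t⁻¹ : Kˣ) : K) * g.s) := rfl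

instance : Group (Aff K) where
  mul_assoc a b c := by
    ext
    · simp [mul_assoc]
    · simp only [mul_s, mul_t, Units.val_mul]; ring
  one_mul a := by ext <;> simp
  mul_one a := by ext <;> simp
  inv_mul_cancel a := by
    ext
    · simp
    · simp

/-- The element `x_λ` of the group `TS`. -/
def xT (u : Kˣ) : Aff K := ⟨u, 0⟩

/-- The element `s_b` of the group `TS`. -/
def sS (b : K) : Aff K := ⟨1, b⟩

@[simp] lemma xT_t (u : Kˣ) : (xT u : Aff K).t = u := rfl
@[simp] lemma xT_s (u : Kˣ) : (xT u : Aff K).s = 0 := rfl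
@[simp] lemma sS_t (b : K) : (sS b : Aff K).t = 1 := rfl
@[simp] lemma sS_s (b : K) : (sS b : Aff K).s = b := rfl

/-- `T ≅ k^×` as a subgroup of `TS`. -/
def xTHom : Kˣ →* Aff K where
  toFun := xT
  map_one' := rfl
  map_mul' u v := by ext <;> simp [xT]

@[simp] lemma xTHom_apply (u : Kˣ) : (xTHom u : Aff K) = xT u := rfl

lemma mul_sS (g : Aff K) (b : K) : g * sS b = sS ((g.t : K) * b) * g := by
  ext
  · simp
  · simp [add_comm]

lemma sS_mul (b : K) (g : Aff K) : sS b * g = g * sS (((g.t⁻¹ : Kˣ) : K) * b) := by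
  ext
  · simp
  · simp [Units.mul_inv_cancel_left, add_comm]

lemma aff_decomp (g : Aff K) : g = xT g.t * sS (((g.t⁻¹ : Kˣ) : K) * g.s) := by
  ext
  · simp
  · simp [Units.mul_inv_cancel_left]

instance [TopologicalSpace K] : TopologicalSpace (Aff K) :=
  TopologicalSpace.induced (fun g : Aff K => ((g.t, g.s) : Kˣ × K)) inferInstance

end Aff

/-! ### Generalities on representations of a monoid on complex vector spaces. -/

namespace GRep

variable {G : Type*} [Monoid G]

section MonoidModules

variable {V W : Type*} [AddCommMonoid V] [Module ℂ V] [AddCommMonoid W] [Module ℂ W]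

/-- A submodule invariant under the representation. -/
def Invariant (ρ : Representation ℂ G V) (U : Submodule ℂ V) : Prop :=
  ∀ (g : G) (v : V), v ∈ U → ρ g v ∈ U

/-- Equivariance of a linear map with respect to two representations. -/
def Equivariant (ρ : Representation ℂ G V) (σ : Representation ℂ G W) (f : V →ₗ[ℂ] W) : Prop :=
  ∀ (g : G) (v : V), f (ρ g v) = σ g (f v)

/-- Isomorphism of representations. -/
def Iso (ρ : Representation ℂ G V) (σ : Representation ℂ G W) : Prop :=
  ∃ e : V ≃ₗ[ℂ] W, ∀ (g : G) (v : V), e (ρ g v) = σ g (e v)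

/-- Irreducibility. -/
def Irred (ρ : Representation ℂ G V) : Prop :=
  Nontrivial V ∧ ∀ U : Submodule ℂ V, Invariant ρ U → U = ⊥ ∨ U = ⊤

/-- Subrepresentation on an invariant submodule. -/
def sub (ρ : Representation ℂ G V) {U : Submodule ℂ V} (hU : Invariant ρ U) :
    Representation ℂ G ↥U where
  toFun g := (ρ g).restrict fun v hv => hU g v hv
  map_one' := by
    apply LinearMap.ext; intro v; apply Subtype.ext
    simp [LinearMap.restrict_apply]
  map_mul' g h := by
    apply LinearMap.ext; intro v; apply Subtype.ext
    simp [LinearMap.restrict_apply]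

@[simp] lemma sub_apply (ρ : Representation ℂ G V) {U : Submodule ℂ V} (hU : Invariant ρ U)
    (g : G) (v : ↥U) : ((sub ρ hU g v : ↥U) : V) = ρ g (v : V) := rfl

lemma ker_invariant (ρ : Representation ℂ G V) (σ : Representation ℂ G W)
    (f : V →ₗ[ℂ] W) (hf : Equivariant ρ σ f) : Invariant ρ (LinearMap.ker f) := by
  intro g v hv
  rw [LinearMap.mem_ker] at hv ⊢
  rw [hf g v, hv, map_zero]

lemma range_invariant (ρ : Representation ℂ G V) (σ : Representation ℂ G W)
    (f : V →ₗ[ℂ] W) (hf : Equivariant ρ σ f) : Invariant σ (LinearMap.range f) := by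
  rintro g w ⟨v, rfl⟩
  exact ⟨ρ g v, hf g v⟩

lemma map_invariant (ρ : Representation ℂ G V) (σ : Representation ℂ G W)
    (f : V →ₗ[ℂ] W) (hf : Equivariant ρ σ f) (U : Submodule ℂ V) (hU : Invariant ρ U) :
    Invariant σ (U.map f) := by
  rintro g w ⟨v, hv, rfl⟩
  exact ⟨ρ g v, hU g v hv, hf g v⟩

end MonoidModules

section GroupModules

variable {V W : Type*} [AddCommGroup V] [Module ℂ V] [AddCommGroup W] [Module ℂ W]

/-- Quotient representation. -/
def quot (ρ : Representation ℂ G V) (U : Submodule ℂ V) (hU : Invariant ρ U) :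
    Representation ℂ G (V ⧸ U) where
  toFun g := U.mapQ U (ρ g) fun v hv => hU g v hv
  map_one' := by
    apply LinearMap.ext; intro x
    obtain ⟨v, rfl⟩ := Submodule.Quotient.mk_surjective U x
    simp [Submodule.mapQ_apply]
  map_mul' g h := by
    apply LinearMap.ext; intro x
    obtain ⟨v, rfl⟩ := Submodule.Quotient.mk_surjective U x
    simp [Submodule.mapQ_apply]

@[simp] lemma quot_apply (ρ : Representation ℂ G V) (U : Submodule ℂ V) (hU : Invariant ρ U)
    (g : G) (v : V) :
    quot ρ U hU g (Submodule.Quotient.mk v) = Submodule.Quotient.mk (ρ g v) := rfl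

/-- Subquotient representation on `B/A`. -/
def subquot (ρ : Representation ℂ G V) {A B : Submodule ℂ V}
    (hA : Invariant ρ A) (hB : Invariant ρ B) :
    Representation ℂ G (↥B ⧸ A.comap B.subtype) :=
  quot (sub ρ hB) (A.comap B.subtype) fun g v hv => hA g v.1 hv

lemma mkQ_equivariant (ρ : Representation ℂ G V) (U : Submodule ℂ V) (hU : Invariant ρ U) :
    Equivariant ρ (quot ρ U hU) U.mkQ := by
  intro g v
  show Submodule.Quotient.mk (ρ g v) = quot ρ U hU g (Submodule.Quotient.mk v)
  rw [quot_apply]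

end GroupModules

end GRep

/-! ### TS-modules: representations of the affine group. -/

/-- A `TS`-module structure on `V` is a representation of the group `TS ≅ Gl_a(1)`. -/
abbrev Rep (K : Type*) [Field K] (V : Type*) [AddCommGroup V] [Module ℂ V] :=
  Representation ℂ (Aff K) V

section RepDefs

open Aff

variable {K : Type*} [Field K]
variable {V W : Type*} [AddCommGroup V] [Module ℂ V] [AddCommGroup W] [Module ℂ W]

/-- Smoothness: every vector has open stabilizer. -/
def IsSmoothRep [TopologicalSpace K] (ρ : Rep K V) : Prop :=
  ∀ v : V, IsOpen {g : Aff K | ρ g v = v}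

/-- Smoothness of a `T`-module, i.e. of a representation of `T ≅ k^×`. -/
def TIsSmooth {X : Type*} [AddCommMonoid X] [Module ℂ X] [TopologicalSpace K]
    (τ : Representation ℂ Kˣ X) : Prop :=
  ∀ x : X, IsOpen {u : Kˣ | τ u x = x}

/-- Smooth character of `T ≅ k^×` (open kernel, equivalently locally constant). -/
def SmoothMulChar [TopologicalSpace K] (χ : Kˣ →* ℂˣ) : Prop :=
  IsOpen {u : Kˣ | χ u = 1}

/-- The space `V^S` of `S`-invariants. -/
def sInv (ρ : Rep K V) : Submodule ℂ V where
  carrier := {v | ∀ b : K, ρ (sS b) v = v}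
  zero_mem' := fun b => map_zero _
  add_mem' {a b} ha hb := fun c => by rw [map_add, ha c, hb c]
  smul_mem' c v hv := fun b => by rw [map_smul, hv b]

@[simp] lemma mem_sInv (ρ : Rep K V) (v : V) :
    v ∈ sInv ρ ↔ ∀ b : K, ρ (sS b) v = v := Iff.rfl

/-- The `χ`-eigenspace `X^{T,χ}` of a `T`-module. -/
def tEigenT {X : Type*} [AddCommMonoid X] [Module ℂ X]
    (τ : Representation ℂ Kˣ X) (χ : Kˣ →* ℂˣ) : Submodule ℂ X where
  carrier := {x | ∀ u : Kˣ, τ u x = (χ u : ℂ) • x}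
  zero_mem' := fun u => by simp
  add_mem' {a b} ha hb := fun u => by rw [map_add, ha u, hb u, smul_add]
  smul_mem' c x hx := fun u => by rw [map_smul, hx u]; exact smul_comm c ((χ u : ℂ)) x

@[simp] lemma mem_tEigenT {X : Type*} [AddCommMonoid X] [Module ℂ X]
    (τ : Representation ℂ Kˣ X) (χ : Kˣ →* ℂˣ) (x : X) :
    x ∈ tEigenT τ χ ↔ ∀ u : Kˣ, τ u x = (χ u : ℂ) • x := Iff.rfl

/-- The `χ`-eigenspace `V^{T,χ}` of a `TS`-module. -/
def tEigen (ρ : Rep K V) (χ : Kˣ →* ℂˣ) : Submodule ℂ V := tEigenT (ρ.comp xTHom) χ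

/-- The kernel of the projection to the `S`-coinvariants `V_S`. -/
def sCoinvKer (ρ : Rep K V) : Submodule ℂ V :=
  Submodule.span ℂ {w : V | ∃ (b : K) (v : V), w = ρ (sS b) v - v}

/-- The kernel of the projection to the twisted coinvariants `V_{S,ψ'}`. -/
def sTwistKer (ρ : Rep K V) (ψ' : AddChar K ℂ) : Submodule ℂ V :=
  Submodule.span ℂ {w : V | ∃ (b : K) (v : V), w = ρ (sS b) v - ψ' b • v}

/-- The kernel of the projection to the `χ`-coinvariants `X_{T,χ}` of a `T`-module. -/
def tTwistKerT {X : Type*} [AddCommGroup X] [Module ℂ X]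
    (τ : Representation ℂ Kˣ X) (χ : Kˣ →* ℂˣ) : Submodule ℂ X :=
  Submodule.span ℂ {w : X | ∃ (u : Kˣ) (x : X), w = τ u x - (χ u : ℂ) • x}

/-- The kernel of the projection to the `χ`-coinvariants `V_{T,χ}` of a `TS`-module. -/
def tTwistKer (ρ : Rep K V) (χ : Kˣ →* ℂˣ) : Submodule ℂ V := tTwistKerT (ρ.comp xTHom) χ

lemma sCoinvKer_invariant (ρ : Rep K V) : GRep.Invariant ρ (sCoinvKer ρ) := by
  intro g v hv
  have h : sCoinvKer ρ ≤ Submodule.comap (ρ g) (sCoinvKer ρ) := by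
    refine Submodule.span_le.2 ?_
    rintro w ⟨b, v', rfl⟩
    simp only [SetLike.mem_coe, Submodule.mem_comap, map_sub]
    have h1 : ρ g (ρ (sS b) v') = ρ (sS ((g.t : K) * b)) (ρ g v') := by
      rw [← Module.End.mul_apply, ← map_mul, mul_sS, map_mul, Module.End.mul_apply]
    rw [h1]
    exact Submodule.subset_span ⟨(g.t : K) * b, ρ g v', rfl⟩
  exact h hv

lemma sInv_invariant (ρ : Rep K V) : GRep.Invariant ρ (sInv ρ) := by
  intro g v hv
  rw [mem_sInv] at hv ⊢
  intro b
  have h1 : ρ (sS b) (ρ g v) = ρ g (ρ (sS (((g.t⁻¹ : Kˣ) : K) * b)) v) := by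
    rw [← Module.End.mul_apply, ← map_mul, sS_mul, map_mul, Module.End.mul_apply]
  rw [h1, hv _]

/-- The `S`-coinvariants `π₀(V) = V_S` as a `TS`-module (`S` acting trivially). -/
def piZeroRep (ρ : Rep K V) : Rep K (V ⧸ sCoinvKer ρ) :=
  GRep.quot ρ (sCoinvKer ρ) (sCoinvKer_invariant ρ)

/-- The `S`-coinvariants `π₀(V) = V_S` as a `T`-module. -/
def piZeroT (ρ : Rep K V) : Representation ℂ Kˣ (V ⧸ sCoinvKer ρ) :=
  (piZeroRep ρ).comp xTHom

/-- The `T`-module structure on `κ(V) = V^S`. -/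
def sInvT (ρ : Rep K V) : Representation ℂ Kˣ ↥(sInv ρ) :=
  (GRep.sub ρ (sInv_invariant ρ)).comp xTHom

/-- A `TS`-module is perfect if all its eigenspaces `V^{T,χ}` for smooth `χ` vanish. -/
def Perfect [TopologicalSpace K] (ρ : Rep K V) : Prop :=
  ∀ χ : Kˣ →* ℂˣ, SmoothMulChar χ → tEigen ρ χ = ⊥

/-- A finite-dimensional `T`-module is cyclic if each generalized eigenspace is a single
Jordan block; equivalently all eigenspaces `X^{T,χ}` have dimension at most one. -/
def TCyclic {X : Type*} [AddCommGroup X] [Module ℂ X]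
    (τ : Representation ℂ Kˣ X) : Prop :=
  ∀ χ : Kˣ →* ℂˣ, Module.finrank ℂ ↥(tEigenT τ χ) ≤ 1

lemma sCoinvKer_le_comap (ρ : Rep K V) (σ : Rep K W)
    (f : V →ₗ[ℂ] W) (hf : GRep.Equivariant ρ σ f) :
    sCoinvKer ρ ≤ (sCoinvKer σ).comap f := by
  refine Submodule.span_le.2 ?_
  rintro w ⟨b, v, rfl⟩
  simp only [SetLike.mem_coe, Submodule.mem_comap, map_sub]
  rw [hf]
  exact Submodule.subset_span ⟨b, f v, rfl⟩

/-- The map induced by an equivariant map on the `S`-coinvariants `π₀`. -/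
def piZeroMap (ρ : Rep K V) (σ : Rep K W) (f : V →ₗ[ℂ] W) (hf : GRep.Equivariant ρ σ f) :
    (V ⧸ sCoinvKer ρ) →ₗ[ℂ] (W ⧸ sCoinvKer σ) :=
  Submodule.mapQ _ _ f (sCoinvKer_le_comap ρ σ f hf)

lemma piZeroMap_equivariant (ρ : Rep K V) (σ : Rep K W) (f : V →ₗ[ℂ] W)
    (hf : GRep.Equivariant ρ σ f) :
    GRep.Equivariant (piZeroRep ρ) (piZeroRep σ) (piZeroMap ρ σ f hf) := by
  intro g x
  obtain ⟨v, rfl⟩ := Submodule.Quotient.mk_surjective _ x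
  show piZeroMap ρ σ f hf (piZeroRep ρ g (Submodule.Quotient.mk v))
      = piZeroRep σ g (piZeroMap ρ σ f hf (Submodule.Quotient.mk v))
  rw [show piZeroRep ρ g (Submodule.Quotient.mk v) = Submodule.Quotient.mk (ρ g v) from rfl]
  rw [show piZeroMap ρ σ f hf (Submodule.Quotient.mk v) = Submodule.Quotient.mk (f v) from rfl]
  rw [show piZeroMap ρ σ f hf (Submodule.Quotient.mk (ρ g v))
      = Submodule.Quotient.mk (f (ρ g v)) from rfl]
  rw [show piZeroRep σ g (Submodule.Quotient.mk (f v)) = Submodule.Quotient.mk (σ g (f v)) from rfl]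
  rw [hf]

lemma kappaImg_invariant (ρ : Rep K V) :
    GRep.Invariant (piZeroT ρ) ((sInv ρ).map (sCoinvKer ρ).mkQ) := by
  rintro u w ⟨v, hv, rfl⟩
  refine ⟨ρ (xT u) v, sInv_invariant ρ (xT u) v hv, ?_⟩
  rfl

end RepDefs

/-! ### Composition series and degree. -/

/-- A composition series for a `TS`-module, witnessing finite length: a maximal chain of
invariant submodules (the subquotients are then irreducible). -/
structure CompSeries {K : Type*} [Field K] {V : Type*} [AddCommGroup V] [Module ℂ V]
    (ρ : Rep K V) where
  n : ℕ
  W : ℕ → Submodule ℂ V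
  bot : W 0 = ⊥
  top : W n = ⊤
  inv : ∀ i, GRep.Invariant ρ (W i)
  lt : ∀ i < n, W i < W (i + 1)
  maximal : ∀ i < n, ∀ C : Submodule ℂ V, GRep.Invariant ρ C → W i ≤ C → C ≤ W (i + 1) →
    C = W i ∨ C = W (i + 1)

/-- The number of Jordan–Hölder constituents of a composition series isomorphic to a given
representation `σ` (applied with `σ = 𝕊`, this is the degree). -/
def CompSeries.deg {K : Type*} [Field K] {V : Type*} [AddCommGroup V] [Module ℂ V]
    {ρ : Rep K V} (c : CompSeries ρ) {W₀ : Type*} [AddCommMonoid W₀] [Module ℂ W₀]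
    (σ : Representation ℂ (Aff K) W₀) : ℕ :=
  (Finset.univ.filter fun i : Fin c.n =>
    GRep.Iso (GRep.subquot ρ (c.inv i.1) (c.inv (i.1 + 1))) σ).card

/-! ### Fiber products of a `T`-module with a `TS`-module over a `T`-module. -/

section Fiber

open Aff

variable {K : Type*} [Field K]
variable {X Y E : Type*} [AddCommGroup X] [Module ℂ X] [AddCommGroup Y] [Module ℂ Y]
  [AddCommGroup E] [Module ℂ E]

/-- The product `TS`-module `X × E` where `S` acts trivially on the `T`-module `X`. -/
def prodRepTE (τ : Representation ℂ Kˣ X) (ρ : Rep K E) : Rep K (X × E) where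
  toFun g := (τ g.t).prodMap (ρ g)
  map_one' := by
    apply LinearMap.ext; rintro ⟨x, v⟩
    simp
  map_mul' g h := by
    apply LinearMap.ext; rintro ⟨x, v⟩
    simp [map_mul]

/-- The underlying space of the fiber product `𝔼[f] = X ×_Y E`. -/
def fiberKer (f : X →ₗ[ℂ] Y) (q : E →ₗ[ℂ] Y) : Submodule ℂ (X × E) :=
  LinearMap.ker (f.comp (LinearMap.fst ℂ X E) - q.comp (LinearMap.snd ℂ X E))

lemma mem_fiberKer (f : X →ₗ[ℂ] Y) (q : E →ₗ[ℂ] Y) (p : X × E) :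
    p ∈ fiberKer f q ↔ f p.1 = q p.2 := by
  simp [fiberKer, sub_eq_zero]

lemma fiber_invariant (τX : Representation ℂ Kˣ X) (ρE : Rep K E)
    (τY : Representation ℂ Kˣ Y) (f : X →ₗ[ℂ] Y) (q : E →ₗ[ℂ] Y)
    (hf : ∀ (u : Kˣ) (x : X), f (τX u x) = τY u (f x))
    (hq : sCoinvKer ρE ≤ LinearMap.ker q)
    (hqT : ∀ (u : Kˣ) (v : E), q (ρE (xT u) v) = τY u (q v)) :
    GRep.Invariant (prodRepTE τX ρE) (fiberKer f q) := by
  intro g p hp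
  rw [mem_fiberKer] at hp ⊢
  have hsb : q (ρE (sS (((g.t⁻¹ : Kˣ) : K) * g.s)) p.2) = q p.2 := by
    have h1 : ρE (sS (((g.t⁻¹ : Kˣ) : K) * g.s)) p.2 - p.2 ∈ sCoinvKer ρE :=
      Submodule.subset_span ⟨_, _, rfl⟩
    have h2 := hq h1
    rw [LinearMap.mem_ker, map_sub, sub_eq_zero] at h2
    exact h2
  have hdecomp : ρE g p.2 = ρE (xT g.t) (ρE (sS (((g.t⁻¹ : Kˣ) : K) * g.s)) p.2) := by
    conv_lhs => rw [aff_decomp g]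
    rw [map_mul, Module.End.mul_apply]
  have h1 : ((prodRepTE τX ρE) g p).1 = τX g.t p.1 := rfl
  have h2 : ((prodRepTE τX ρE) g p).2 = ρE g p.2 := rfl
  rw [h1, h2, hf, hp, hdecomp, hqT, hsb]

end Fiber

/-! ### Jordan blocks of finite-dimensional `T`-modules. -/

section Jordan

variable {K : Type*} [Field K]
variable {X : Type*} [AddCommGroup X] [Module ℂ X]

/-- A Jordan block of a `T`-module: a nonzero indecomposable invariant direct summand. -/
def IsJordanBlock (τ : Representation ℂ Kˣ X) (J : Submodule ℂ X) : Prop :=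
  J ≠ ⊥ ∧ GRep.Invariant τ J ∧ (∃ C : Submodule ℂ X, GRep.Invariant τ C ∧ IsCompl J C) ∧
    ∀ A B : Submodule ℂ X, GRep.Invariant τ A → GRep.Invariant τ B → A ≤ J → B ≤ J →
      A ⊓ B = ⊥ → A ⊔ B = J → A = ⊥ ∨ B = ⊥

end Jordan

/-! ### Invariants and coinvariants for a normal subgroup of an arbitrary group. -/

section Grp

variable {Γ : Type*} [Group Γ]
variable {V W : Type*} [AddCommGroup V] [Module ℂ V] [AddCommGroup W] [Module ℂ W]

/-- Invariants `V^N` under a subgroup `N`. -/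
def grpInv (ρ : Representation ℂ Γ V) (N : Subgroup Γ) : Submodule ℂ V where
  carrier := {v | ∀ n ∈ N, ρ n v = v}
  zero_mem' := fun n _ => map_zero _
  add_mem' {a b} ha hb := fun n hn => by rw [map_add, ha n hn, hb n hn]
  smul_mem' c v hv := fun n hn => by rw [map_smul, hv n hn]

@[simp] lemma mem_grpInv (ρ : Representation ℂ Γ V) (N : Subgroup Γ) (v : V) :
    v ∈ grpInv ρ N ↔ ∀ n ∈ N, ρ n v = v := Iff.rfl

/-- The kernel of the projection to the coinvariants `V_N` under a subgroup `N`. -/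
def grpCoinvKer (ρ : Representation ℂ Γ V) (N : Subgroup Γ) : Submodule ℂ V :=
  Submodule.span ℂ {w : V | ∃ n ∈ N, ∃ v : V, w = ρ n v - v}

lemma grpInv_invariant (ρ : Representation ℂ Γ V) (N : Subgroup Γ) [hN : N.Normal] :
    GRep.Invariant ρ (grpInv ρ N) := by
  intro γ v hv
  rw [mem_grpInv] at hv ⊢
  intro n hn
  have hmem : γ⁻¹ * n * γ ∈ N := by
    have := hN.conj_mem n hn γ⁻¹
    simpa using this
  have key : ρ n (ρ γ v) = ρ γ (ρ (γ⁻¹ * n * γ) v) := by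
    rw [← Module.End.mul_apply, ← map_mul, ← Module.End.mul_apply, ← map_mul]
    congr 1
    group
  rw [key, hv _ hmem]

lemma grpCoinvKer_invariant (ρ : Representation ℂ Γ V) (N : Subgroup Γ) [hN : N.Normal] :
    GRep.Invariant ρ (grpCoinvKer ρ N) := by
  intro γ v hv
  have h : grpCoinvKer ρ N ≤ Submodule.comap (ρ γ) (grpCoinvKer ρ N) := by
    refine Submodule.span_le.2 ?_
    rintro w ⟨n, hn, v', rfl⟩
    simp only [SetLike.mem_coe, Submodule.mem_comap, map_sub]
    have key : ρ γ (ρ n v') = ρ (γ * n * γ⁻¹) (ρ γ v') := by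
      rw [← Module.End.mul_apply, ← map_mul, ← Module.End.mul_apply, ← map_mul]
      congr 1
      group
    rw [key]
    exact Submodule.subset_span ⟨γ * n * γ⁻¹, hN.conj_mem n hn γ, ρ γ v', rfl⟩
  exact h hv

/-- The map induced on `N`-invariants by an equivariant map. -/
def grpInvRestrict (ρ : Representation ℂ Γ V) (σ : Representation ℂ Γ W) (N : Subgroup Γ)
    (f : V →ₗ[ℂ] W) (hf : GRep.Equivariant ρ σ f) : ↥(grpInv ρ N) →ₗ[ℂ] ↥(grpInv σ N) :=
  f.restrict (fun v hv => by
    rw [mem_grpInv] at hv ⊢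
    intro n hn
    rw [← hf n v, hv n hn])

lemma grpCoinvKer_le_comap (ρ : Representation ℂ Γ V) (σ : Representation ℂ Γ W) (N : Subgroup Γ)
    (f : V →ₗ[ℂ] W) (hf : GRep.Equivariant ρ σ f) :
    grpCoinvKer ρ N ≤ (grpCoinvKer σ N).comap f := by
  refine Submodule.span_le.2 ?_
  rintro w ⟨n, hn, v, rfl⟩
  simp only [SetLike.mem_coe, Submodule.mem_comap, map_sub]
  rw [hf]
  exact Submodule.subset_span ⟨n, hn, f v, rfl⟩

/-- The map induced on `N`-coinvariants by an equivariant map. -/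
def grpCoinvMap (ρ : Representation ℂ Γ V) (σ : Representation ℂ Γ W) (N : Subgroup Γ)
    (f : V →ₗ[ℂ] W) (hf : GRep.Equivariant ρ σ f) :
    (V ⧸ grpCoinvKer ρ N) →ₗ[ℂ] (W ⧸ grpCoinvKer σ N) :=
  Submodule.mapQ _ _ f (grpCoinvKer_le_comap ρ σ N f hf)

end Grp

/-! ### Tate L-factors of finite-dimensional `T`-modules. -/

section Lfactor

variable {K : Type*} [NontriviallyNormedField K]
variable {X : Type*} [AddCommGroup X] [Module ℂ X]

/-- The part of a `T`-module where the `χ`-twisted action is unramified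
(trivial on the norm-one units). -/
def unrPart (τ : Representation ℂ Kˣ X) (χ : Kˣ →* ℂˣ) : Submodule ℂ X where
  carrier := {x | ∀ u : Kˣ, ‖(u : K)‖ = 1 → (χ u : ℂ) • τ u x = x}
  zero_mem' := fun u _ => by simp
  add_mem' {a b} ha hb := fun u hu => by rw [map_add, smul_add, ha u hu, hb u hu]
  smul_mem' c x hx := fun u hu => by
    rw [map_smul, smul_comm, hx u hu]

lemma unrPart_stable (τ : Representation ℂ Kˣ X) (χ : Kˣ →* ℂˣ) (ϖ : Kˣ) :
    ∀ x ∈ unrPart τ χ, ((χ ϖ : ℂ) • τ ϖ) x ∈ unrPart τ χ := by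
  intro x hx u hu
  have comm : τ u (τ ϖ x) = τ ϖ (τ u x) := by
    rw [← Module.End.mul_apply, ← map_mul, mul_comm, map_mul, Module.End.mul_apply]
  calc (χ u : ℂ) • τ u (((χ ϖ : ℂ) • τ ϖ) x)
      = (χ ϖ : ℂ) • ((χ u : ℂ) • τ u (τ ϖ x)) := by
        rw [LinearMap.smul_apply, map_smul, smul_comm]
    _ = (χ ϖ : ℂ) • τ ϖ ((χ u : ℂ) • τ u x) := by rw [comm, map_smul]
    _ = ((χ ϖ : ℂ) • τ ϖ) x := by rw [hx u hu, LinearMap.smul_apply]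

/-- The twisted uniformizer action on the unramified part. -/
def twistOp (τ : Representation ℂ Kˣ X) (χ : Kˣ →* ℂˣ) (ϖ : Kˣ) :
    ↥(unrPart τ χ) →ₗ[ℂ] ↥(unrPart τ χ) :=
  LinearMap.restrict ((χ ϖ : ℂ) • τ ϖ) (unrPart_stable τ χ ϖ)

/-- The Tate `L`-factor `L(s, χ ⊗ X) = det(1 - q^{-s}·(χ·τ)(ϖ) | X^{unr,χ})⁻¹` of a
(finite-dimensional) `T`-module `X`, relative to a uniformizer `ϖ`. -/
def Lfactor (τ : Representation ℂ Kˣ X) (χ : Kˣ →* ℂˣ) (ϖ : Kˣ) (s : ℂ) : ℂ :=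
  (LinearMap.det (LinearMap.id - (‖(ϖ : K)‖ : ℂ) ^ s • twistOp τ χ ϖ))⁻¹

end Lfactor

/-! ### The concrete `TS`-modules `𝕊`, `C_c^∞(k)`, `C_b^∞(k^×)` and `𝔼[χ]`. -/

section Concrete

open Aff

variable (K : Type*) [NontriviallyNormedField K]

/-- The representation of `TS` on functions on `k^×`:
`(s_b g)(x) = ψ(bx) g(x)`, `(x_λ g)(x) = g(xλ)`. -/
def repCx (ψ : AddChar K ℂ) : Rep K (Kˣ → ℂ) where
  toFun g :=
    { toFun := fun f x => ψ (g.s * (x : K)) * f (x * g.t)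
      map_add' := fun f₁ f₂ => by funext x; simp [mul_add]
      map_smul' := fun c f => by
        funext x
        simp only [Pi.smul_apply, smul_eq_mul, RingHom.id_apply]
        ring }
  map_one' := by
    apply LinearMap.ext; intro f; funext x
    simp
  map_mul' g h := by
    apply LinearMap.ext; intro f; funext x
    show ψ ((g.s + (g.t : K) * h.s) * (x : K)) * f (x * (g.t * h.t))
        = ψ (g.s * (x : K)) * (ψ (h.s * ((x * g.t : Kˣ) : K)) * f (x * g.t * h.t))
    have harg : (g.s + (g.t : K) * h.s) * (x : K)
        = g.s * (x : K) + h.s * ((x * g.t : Kˣ) : K) := by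
      push_cast
      ring
    rw [harg, AddChar.map_add_eq_mul, ← mul_assoc x g.t h.t]
    ring

@[simp] lemma repCx_apply (ψ : AddChar K ℂ) (g : Aff K) (f : Kˣ → ℂ) (x : Kˣ) :
    repCx K ψ g f x = ψ (g.s * (x : K)) * f (x * g.t) := rfl

/-- The `χ`-twisted representation of `TS` on functions on `k`:
`(s_b g)(x) = ψ(bx) g(x)`, `(x_λ g)(x) = χ(λ) g(xλ)`.  (Take `χ = 1` for the
untwisted action on `C_c^∞(k)`; the module `𝔼[χ]` is `C_c^∞(k)` with the twisted action.) -/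
def repCc (ψ : AddChar K ℂ) (χ : Kˣ →* ℂˣ) : Rep K (K → ℂ) where
  toFun g :=
    { toFun := fun f x => (χ g.t : ℂ) * ψ (g.s * x) * f (x * (g.t : K))
      map_add' := fun f₁ f₂ => by funext x; simp [mul_add]
      map_smul' := fun c f => by
        funext x
        simp only [Pi.smul_apply, smul_eq_mul, RingHom.id_apply]
        ring }
  map_one' := by
    apply LinearMap.ext; intro f; funext x
    simp
  map_mul' g h := by
    apply LinearMap.ext; intro f; funext x
    show (χ (g.t * h.t) : ℂ) * ψ ((g.s + (g.t : K) * h.s) * x) * f (x * ((g.t * h.t : Kˣ) : K))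
        = (χ g.t : ℂ) * ψ (g.s * x) * ((χ h.t : ℂ) * ψ (h.s * (x * (g.t : K)))
            * f (x * (g.t : K) * (h.t : K)))
    have harg : (g.s + (g.t : K) * h.s) * x = g.s * x + h.s * (x * (g.t : K)) := by ring
    have harg2 : x * ((g.t * h.t : Kˣ) : K) = x * (g.t : K) * (h.t : K) := by
      push_cast
      ring
    rw [harg, harg2, AddChar.map_add_eq_mul, map_mul]
    push_cast
    ring

@[simp] lemma repCc_apply (ψ : AddChar K ℂ) (χ : Kˣ →* ℂˣ) (g : Aff K) (f : K → ℂ) (x : K) :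
    repCc K ψ χ g f x = (χ g.t : ℂ) * ψ (g.s * x) * f (x * (g.t : K)) := rfl

/-- The one-dimensional `TS`-module `ℂ_χ` on which `S` acts trivially and `x_λ` by `χ(λ)`. -/
def chiRep (χ : Kˣ →* ℂˣ) : Rep K ℂ where
  toFun g := (χ g.t : ℂ) • LinearMap.id
  map_one' := by
    apply LinearMap.ext; intro c
    simp
  map_mul' g h := by
    apply LinearMap.ext; intro c
    simp only [mul_t, map_mul, LinearMap.smul_apply, LinearMap.id_apply, Module.End.mul_apply,
      Units.val_mul, smul_eq_mul]
    ring

/-- `C_c^∞(k)`: locally constant, compactly supported functions on `k`. -/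
def CcK : Submodule ℂ (K → ℂ) where
  carrier := {f | IsLocallyConstant f ∧ HasCompactSupport f}
  zero_mem' := ⟨IsLocallyConstant.const 0, by
    rw [hasCompactSupport_def]
    simp⟩
  add_mem' {a b} ha hb := ⟨ha.1.comp₂ hb.1 (· + ·), ha.2.add hb.2⟩
  smul_mem' c f hf := by
    refine ⟨?_, hf.2.mono (Function.support_const_smul_subset c f)⟩
    exact hf.1.comp (fun z => c * z)

@[simp] lemma mem_CcK (f : K → ℂ) :
    f ∈ CcK K ↔ IsLocallyConstant f ∧ HasCompactSupport f := Iff.rfl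

/-- `𝕊 = C_c^∞(k^×)`: locally constant, compactly supported functions on `k^×`. -/
def SSx : Submodule ℂ (Kˣ → ℂ) where
  carrier := {f | IsLocallyConstant f ∧ HasCompactSupport f}
  zero_mem' := ⟨IsLocallyConstant.const 0, by
    rw [hasCompactSupport_def]
    simp⟩
  add_mem' {a b} ha hb := ⟨ha.1.comp₂ hb.1 (· + ·), ha.2.add hb.2⟩
  smul_mem' c f hf := by
    refine ⟨?_, hf.2.mono (Function.support_const_smul_subset c f)⟩
    exact hf.1.comp (fun z => c * z)

@[simp] lemma mem_SSx (f : Kˣ → ℂ) :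
    f ∈ SSx K ↔ IsLocallyConstant f ∧ HasCompactSupport f := Iff.rfl

/-- `C_b^∞(k^×)`: locally constant functions on `k^×` whose support has compact closure
in `k`. -/
def Cb : Submodule ℂ (Kˣ → ℂ) where
  carrier := {f | IsLocallyConstant f ∧
    IsCompact (closure (((↑) : Kˣ → K) '' Function.support f))}
  zero_mem' := ⟨IsLocallyConstant.const 0, by simp⟩
  add_mem' {a b} ha hb := by
    refine ⟨ha.1.comp₂ hb.1 (· + ·), ?_⟩
    refine IsCompact.of_isClosed_subset (ha.2.union hb.2) isClosed_closure ?_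
    refine closure_minimal ?_ (ha.2.isClosed.union hb.2.isClosed)
    refine (Set.image_mono (Function.support_add _ _)).trans ?_
    rw [Set.image_union]
    exact Set.union_subset_union subset_closure subset_closure
  smul_mem' c f hf := by
    refine ⟨hf.1.comp (fun z => c * z), ?_⟩
    refine IsCompact.of_isClosed_subset hf.2 isClosed_closure ?_
    refine closure_mono ?_
    exact Set.image_mono (Function.support_const_smul_subset c f)

@[simp] lemma mem_Cb (f : Kˣ → ℂ) :
    f ∈ Cb K ↔ IsLocallyConstant f ∧
      IsCompact (closure (((↑) : Kˣ → K) '' Function.support f)) := Iff.rfl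

variable {K}

lemma SSx_invariant (ψ : AddChar K ℂ) (hψlc : IsLocallyConstant (⇑ψ)) :
    GRep.Invariant (repCx K ψ) (SSx K) := by
  rintro g f hf
  rw [mem_SSx] at hf ⊢
  obtain ⟨hlc, hcs⟩ := hf
  have heq : repCx K ψ g f
      = (fun x : Kˣ => ψ (g.s * (x : K))) * (f ∘ (Homeomorph.mulRight g.t)) := rfl
  constructor
  · rw [heq]
    refine IsLocallyConstant.mul ?_ ?_
    · exact hψlc.comp_continuous (continuous_const.mul Units.continuous_val)
    · exact hlc.comp_continuous (Homeomorph.mulRight g.t).continuous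
  · rw [heq]
    exact (hcs.comp_homeomorph (Homeomorph.mulRight g.t)).mul_left

lemma CcK_invariant (ψ : AddChar K ℂ) (hψlc : IsLocallyConstant (⇑ψ)) (χ : Kˣ →* ℂˣ) :
    GRep.Invariant (repCc K ψ χ) (CcK K) := by
  rintro g f hf
  rw [mem_CcK] at hf ⊢
  obtain ⟨hlc, hcs⟩ := hf
  have hne : ((g.t : Kˣ) : K) ≠ 0 := g.t.ne_zero
  have heq : repCc K ψ χ g f
      = (fun x : K => (χ g.t : ℂ) * ψ (g.s * x)) * (f ∘ (Homeomorph.mulRight₀ (g.t : K) hne)) :=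
    rfl
  constructor
  · rw [heq]
    refine IsLocallyConstant.mul ?_ ?_
    · exact ((hψlc.comp_continuous (continuous_const.mul continuous_id)).comp
        (fun z => (χ g.t : ℂ) * z))
    · exact hlc.comp_continuous (Homeomorph.mulRight₀ (g.t : K) hne).continuous
  · rw [heq]
    exact (hcs.comp_homeomorph (Homeomorph.mulRight₀ (g.t : K) hne)).mul_left

/-- The `TS`-module `𝕊 = C_c^∞(k^×)`. -/
def SRep (ψ : AddChar K ℂ) (hψlc : IsLocallyConstant (⇑ψ)) : Rep K ↥(SSx K) :=
  GRep.sub (repCx K ψ) (SSx_invariant ψ hψlc)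

/-- The `TS`-module `𝔼[χ]`, i.e. `C_c^∞(k)` with the `χ`-twisted action. -/
def ERep (ψ : AddChar K ℂ) (hψlc : IsLocallyConstant (⇑ψ)) (χ : Kˣ →* ℂˣ) : Rep K ↥(CcK K) :=
  GRep.sub (repCc K ψ χ) (CcK_invariant ψ hψlc χ)

/-- The `TS`-module `𝕊^s`, a direct sum of `s` copies of `𝕊`. -/
def SRepPow (ψ : AddChar K ℂ) (hψlc : IsLocallyConstant (⇑ψ)) (s : ℕ) :
    Rep K (Fin s → ↥(SSx K)) where
  toFun g := LinearMap.pi fun i => (SRep ψ hψlc g).comp (LinearMap.proj i)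
  map_one' := by
    apply LinearMap.ext; intro v; funext i
    simp
  map_mul' g h := by
    apply LinearMap.ext; intro v; funext i
    simp [map_mul]

/-- The submodule `E` of `C_b^∞(k^×)` consisting of functions which are `χ`-eigenvectors
modulo `𝕊`; the quotient `E/𝕊` is the `χ`-eigenspace of `C_b^∞(k^×)/𝕊`. -/
def quotEigen (ψ : AddChar K ℂ) (χ : Kˣ →* ℂˣ) : Submodule ℂ (Kˣ → ℂ) where
  carrier := {f | f ∈ Cb K ∧ ∀ u : Kˣ, repCx K ψ (Aff.xT u) f - (χ u : ℂ) • f ∈ SSx K}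
  zero_mem' := ⟨(Cb K).zero_mem, fun u => by simpa using (SSx K).zero_mem⟩
  add_mem' {a b} ha hb := by
    refine ⟨(Cb K).add_mem ha.1 hb.1, fun u => ?_⟩
    rw [map_add, smul_add, add_sub_add_comm]
    exact (SSx K).add_mem (ha.2 u) (hb.2 u)
  smul_mem' c f hf := by
    refine ⟨(Cb K).smul_mem c hf.1, fun u => ?_⟩
    rw [map_smul, smul_comm, ← smul_sub]
    exact (SSx K).smul_mem c (hf.2 u)

/-- Evaluation at `0 ∈ k`, realizing the quotient map `𝔼[χ] → ℂ_χ` with kernel `𝕊`. -/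
def ev0 : ↥(CcK K) →ₗ[ℂ] ℂ where
  toFun f := (f : K → ℂ) 0
  map_add' f g := rfl
  map_smul' c f := rfl

end Concrete

/-! ### The diagonal torus in GL(2). -/

section GL2

variable {K : Type*} [Field K]

/-- The diagonal element `diag(a, b)` of `GL(2, K)`. -/
def diagGL (a b : Kˣ) : Matrix.GeneralLinearGroup (Fin 2) K where
  val := Matrix.diagonal ![(a : K), (b : K)]
  inv := Matrix.diagonal ![((a : K))⁻¹, ((b : K))⁻¹]
  val_inv := by
    ext i j
    fin_cases i <;> fin_cases j <;>
      simp [Matrix.mul_apply, Fin.sum_univ_two, Matrix.diagonal, Matrix.one_apply,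
        a.ne_zero, b.ne_zero]
  inv_val := by
    ext i j
    fin_cases i <;> fin_cases j <;>
      simp [Matrix.mul_apply, Fin.sum_univ_two, Matrix.diagonal, Matrix.one_apply,
        a.ne_zero, b.ne_zero]

end GL2

/-!
For a smooth character `χ`, the index `dim V_{T,χ} - dim V^{T,χ}` is additive in short exact
sequences: taking invariants under the compact group of units of norm one is exact, and on these
invariants a single element `ϖ` of `T` remains, so the index is that of the endomorphism
`χ(ϖ)⁻¹ ϖ - 1`.

A smooth irreducible `TS`-module is either fixed by `S`, hence one-dimensional and of index `0`, or
isomorphic to `𝕊`, of index `1`. Indeed, if some `S`-twisted coinvariant space `V_{S,ψ'}` with `ψ'`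
nontrivial is nonzero, it yields a nonzero map `V → 𝕊`; otherwise Fourier analysis on compact
subgroups of `S` shows that `S` acts trivially. Summing over a composition series,
`dim V_{T,χ} = dim V^{T,χ} + deg V`, which gives (1) ⇔ (3).

For (1) ⇔ (2), every `T`-eigenvector is fixed by `S`, because its stabilizer contains a
neighbourhood of `0` in `S` and `T` contracts `S`; conversely, a nonzero `V^S` contains an
irreducible submodule, which is spanned by an eigenvector of `T`.
-/

section Coindex

variable {k : Type*} [Field k]

/-- `HasCoindex f n` says that the kernel and the cokernel of `f` are finite-dimensional and that
`dim coker f - dim ker f = n`: minus the Fredholm index of `f`, when that is a natural number. -/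
def HasCoindex {M N : Type*} [AddCommGroup M] [Module k M] [AddCommGroup N] [Module k N]
    (f : M →ₗ[k] N) (n : ℕ) : Prop :=
  Module.Finite k (LinearMap.ker f) ∧ Module.Finite k (N ⧸ LinearMap.range f) ∧
    Module.finrank k (N ⧸ LinearMap.range f) = Module.finrank k (LinearMap.ker f) + n

lemma hasCoindex_zero_of_finite {M : Type*} [AddCommGroup M] [Module k M] [Module.Finite k M]
    (f : M →ₗ[k] M) : HasCoindex f 0 := by
  refine ⟨inferInstance, inferInstance, ?_⟩
  have h_ker := LinearMap.finrank_range_add_finrank_ker f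
  have h_coker := Submodule.finrank_quotient_add_finrank (LinearMap.range f)
  omega

lemma finite_and_finrank_eq_of_exact {A B C : Type*} [AddCommGroup A] [Module k A]
    [AddCommGroup B] [Module k B] [AddCommGroup C] [Module k C] {f : A →ₗ[k] B} {g : B →ₗ[k] C}
    (hfg : Function.Exact f g) [Module.Finite k A] [Module.Finite k C] :
    Module.Finite k B ∧ Module.finrank k B =
      Module.finrank k (LinearMap.range f) + Module.finrank k (LinearMap.range g) := by
  have hker : LinearMap.ker g = LinearMap.range f := LinearMap.exact_iff.1 hfg
  have : Module.Finite k (LinearMap.ker g) := by rw [hker]; infer_instance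
  have : Module.Finite k (B ⧸ LinearMap.ker g) := Module.Finite.equiv g.quotKerEquivRange.symm
  have hB : Module.Finite k B := Module.Finite.of_submodule_quotient (LinearMap.ker g)
  exact ⟨hB, by rw [← LinearMap.finrank_range_add_finrank_ker g, hker, add_comm]⟩

variable {M₁ M₂ M₃ N₁ N₂ N₃ : Type*} [AddCommGroup M₁] [Module k M₁] [AddCommGroup M₂]
  [Module k M₂] [AddCommGroup M₃] [Module k M₃] [AddCommGroup N₁] [Module k N₁] [AddCommGroup N₂]
  [Module k N₂] [AddCommGroup N₃] [Module k N₃]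
  {f₁ : M₁ →ₗ[k] N₁} {f₂ : M₂ →ₗ[k] N₂} {f₃ : M₃ →ₗ[k] N₃}
  {i : M₁ →ₗ[k] M₂} {p : M₂ →ₗ[k] M₃} {i' : N₁ →ₗ[k] N₂} {p' : N₂ →ₗ[k] N₃}

lemma exact_restrict_ker (hi' : Function.Injective i') (hip : Function.Exact i p)
    (hi : f₂ ∘ₗ i = i' ∘ₗ f₁)
    (hik : ∀ x ∈ LinearMap.ker f₁, i x ∈ LinearMap.ker f₂)
    (hpk : ∀ x ∈ LinearMap.ker f₂, p x ∈ LinearMap.ker f₃) :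
    Function.Exact (i.restrict hik) (p.restrict hpk) := by
  rintro ⟨y, hy⟩
  constructor
  · intro hz
    obtain ⟨x, rfl⟩ := (hip y).1 (congrArg Subtype.val hz)
    refine ⟨⟨x, hi' ?_⟩, rfl⟩
    rw [map_zero, ← LinearMap.comp_apply, ← hi]
    exact hy
  · rintro ⟨x, hx⟩
    exact Subtype.ext ((hip y).2 ⟨x, congrArg Subtype.val hx⟩)

lemma exact_mapQ_range (hp : Function.Surjective p) (hip' : Function.Exact i' p')
    (hpf : f₃ ∘ₗ p = p' ∘ₗ f₂)
    (hi : LinearMap.range f₁ ≤ (LinearMap.range f₂).comap i')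
    (hp' : LinearMap.range f₂ ≤ (LinearMap.range f₃).comap p') :
    Function.Exact (Submodule.mapQ _ _ i' hi) (Submodule.mapQ _ _ p' hp') := by
  intro y
  obtain ⟨y, rfl⟩ := Submodule.Quotient.mk_surjective _ y
  constructor
  · intro hy
    obtain ⟨z, hz⟩ : p' y ∈ LinearMap.range f₃ := (Submodule.Quotient.mk_eq_zero _).1 hy
    obtain ⟨x, rfl⟩ := hp z
    obtain ⟨w, hw⟩ : y - f₂ x ∈ LinearMap.range i' := by
      refine (hip' _).1 ?_
      rw [map_sub, ← hz, ← LinearMap.comp_apply, ← LinearMap.comp_apply, hpf, sub_self]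
    refine ⟨Submodule.Quotient.mk w, ?_⟩
    rw [Submodule.mapQ_apply, hw, Submodule.Quotient.eq]
    exact ⟨-x, by simp⟩
  · rintro ⟨x, hx⟩
    obtain ⟨x, rfl⟩ := Submodule.Quotient.mk_surjective _ x
    rw [← hx, Submodule.mapQ_apply, Submodule.mapQ_apply, hip'.apply_apply_eq_zero,
      Submodule.Quotient.mk_zero]

theorem HasCoindex.of_exact {m n : ℕ} (h₁ : HasCoindex f₁ m) (h₃ : HasCoindex f₃ n)
    (hp : Function.Surjective p) (hip : Function.Exact i p) (hi : Function.Injective i)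
    (hp' : Function.Surjective p') (hip' : Function.Exact i' p') (hi' : Function.Injective i')
    (hif : f₂ ∘ₗ i = i' ∘ₗ f₁) (hpf : f₃ ∘ₗ p = p' ∘ₗ f₂) : HasCoindex f₂ (m + n) := by
  obtain ⟨_, _, h_index₁⟩ := h₁
  obtain ⟨_, _, h_index₃⟩ := h₃
  let k₁ : LinearMap.ker f₁ →ₗ[k] LinearMap.ker f₂ := i.restrict fun x hx => by
    rw [LinearMap.mem_ker, ← LinearMap.comp_apply, hif, LinearMap.comp_apply, hx, map_zero]
  let k₂ : LinearMap.ker f₂ →ₗ[k] LinearMap.ker f₃ := p.restrict fun x hx => by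
    rw [LinearMap.mem_ker, ← LinearMap.comp_apply, hpf, LinearMap.comp_apply, hx, map_zero]
  let c₁ : (N₁ ⧸ LinearMap.range f₁) →ₗ[k] N₂ ⧸ LinearMap.range f₂ :=
    Submodule.mapQ _ _ i' (by rintro _ ⟨x, rfl⟩; exact ⟨i x, LinearMap.congr_fun hif x⟩)
  let c₂ : (N₂ ⧸ LinearMap.range f₂) →ₗ[k] N₃ ⧸ LinearMap.range f₃ :=
    Submodule.mapQ _ _ p' (by rintro _ ⟨x, rfl⟩; exact ⟨p x, LinearMap.congr_fun hpf x⟩)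
  have hk : Function.Exact k₁ k₂ := exact_restrict_ker hi' hip hif _ _
  have hc : Function.Exact c₁ c₂ := exact_mapQ_range hp hip' hpf _ _
  let δ := SnakeLemma.δ' f₁ f₂ f₃ i p hip i' p' hip' hif.symm hpf.symm
    _ (LinearMap.exact_subtype_ker_map f₃) _ (LinearMap.exact_map_mkQ_range f₁) hp hi'
  have hδ_right : Function.Exact k₂ δ :=
    SnakeLemma.exact_δ'_right f₁ f₂ f₃ i p hip i' p' hip' hif.symm hpf.symm
      _ (LinearMap.exact_subtype_ker_map f₂) _ (LinearMap.exact_subtype_ker_map f₃)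
      _ (LinearMap.exact_map_mkQ_range f₁) hp hi' k₂ rfl Subtype.val_injective
  have hδ_left : Function.Exact δ c₁ :=
    SnakeLemma.exact_δ'_left f₁ f₂ f₃ i p hip i' p' hip' hif.symm hpf.symm
      _ (LinearMap.exact_subtype_ker_map f₃) _ (LinearMap.exact_map_mkQ_range f₁)
      _ (LinearMap.exact_map_mkQ_range f₂) hp hi' c₁ rfl (Submodule.mkQ_surjective _)
  obtain ⟨h_fin_ker, h_ker₂⟩ := finite_and_finrank_eq_of_exact hk
  obtain ⟨-, h_ker₃⟩ := finite_and_finrank_eq_of_exact hδ_right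
  obtain ⟨h_fin_coker, h_coker₂⟩ := finite_and_finrank_eq_of_exact hc
  obtain ⟨-, h_coker₁⟩ := finite_and_finrank_eq_of_exact hδ_left
  have h_ker₁ :=
    LinearMap.finrank_range_of_inj (f := k₁) fun a b hab =>
      Subtype.ext (hi (congrArg Subtype.val hab))
  have h_coker₃ : Module.finrank k (LinearMap.range c₂) =
      Module.finrank k (N₃ ⧸ LinearMap.range f₃) := by
    rw [Submodule.range_mapQ, LinearMap.range_eq_top.2 hp', Submodule.map_top,
      Submodule.range_mkQ, finrank_top]
  exact ⟨h_fin_ker, h_fin_coker, by omega⟩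

end Coindex

section SmoothRepresentations

variable {G : Type*} [Group G] {V W : Type*} [AddCommGroup V] [Module ℂ V] [AddCommGroup W]
  [Module ℂ W]

/-- Smoothness of a representation of a topological group: every vector has an open stabilizer.
For the groups `TS` and `T` this unfolds to `IsSmoothRep` and `TIsSmooth`. -/
def IsSmooth [TopologicalSpace G] (τ : Representation ℂ G V) : Prop :=
  ∀ v : V, IsOpen {g : G | τ g v = v}

/-- The stabilizer of a vector, as a subgroup. -/
def vectorStabilizer (τ : Representation ℂ G V) (v : V) : Subgroup G where
  carrier := {g | τ g v = v}
  one_mem' := by simp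
  mul_mem' {g h} hg hh := by
    rw [Set.mem_ofPred_eq] at *
    rw [map_mul, Module.End.mul_apply, hh, hg]
  inv_mem' {g} hg := by
    rw [Set.mem_ofPred_eq] at *
    nth_rw 1 [← hg]
    rw [← Module.End.mul_apply, ← map_mul, inv_mul_cancel, map_one, Module.End.one_apply]

@[simp] lemma mem_vectorStabilizer {τ : Representation ℂ G V} {v : V} {g : G} :
    g ∈ vectorStabilizer τ v ↔ τ g v = v := Iff.rfl

/-- The elements of `G` that act trivially modulo `D`, as a subgroup. -/
def trivialModulo (τ : Representation ℂ G V) (D : Submodule ℂ V) : Subgroup G where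
  carrier := {g | ∀ v, τ g v - v ∈ D}
  one_mem' v := by simp
  mul_mem' {g h} hg hh v := by
    rw [map_mul, Module.End.mul_apply, ← sub_add_sub_cancel _ (τ h v)]
    exact D.add_mem (hg _) (hh v)
  inv_mem' {g} hg v := by
    have h := hg (τ g⁻¹ v)
    rw [← Module.End.mul_apply, ← map_mul, mul_inv_cancel, map_one, Module.End.one_apply] at h
    rw [← neg_sub]
    exact D.neg_mem h

lemma grpCoinvKer_le_iff {τ : Representation ℂ G V} {N : Subgroup G} {D : Submodule ℂ V} :
    grpCoinvKer τ N ≤ D ↔ N ≤ trivialModulo τ D := by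
  constructor
  · exact fun h n hn v => h (Submodule.subset_span ⟨n, hn, v, rfl⟩)
  · intro h
    refine Submodule.span_le.2 ?_
    rintro _ ⟨n, hn, v, rfl⟩
    exact h hn v

lemma apply_sub_mem_grpCoinvKer (τ : Representation ℂ G V) {N : Subgroup G} {g : G} (hg : g ∈ N)
    (v : V) : τ g v - v ∈ grpCoinvKer τ N :=
  grpCoinvKer_le_iff.1 le_rfl hg v

lemma grpCoinvKer_mono (τ : Representation ℂ G V) : Monotone (grpCoinvKer τ) :=
  fun _ _ h => grpCoinvKer_le_iff.2 (h.trans (grpCoinvKer_le_iff.1 le_rfl))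

lemma grpCoinvKer_sup (τ : Representation ℂ G V) (A B : Subgroup G) :
    grpCoinvKer τ (A ⊔ B) = grpCoinvKer τ A ⊔ grpCoinvKer τ B :=
  le_antisymm
    (grpCoinvKer_le_iff.2 (sup_le (grpCoinvKer_le_iff.1 le_sup_left)
      (grpCoinvKer_le_iff.1 le_sup_right)))
    (sup_le (grpCoinvKer_mono τ le_sup_left) (grpCoinvKer_mono τ le_sup_right))

lemma mem_grpInv_iff_le {τ : Representation ℂ G V} {N : Subgroup G} {v : V} :
    v ∈ grpInv τ N ↔ N ≤ vectorStabilizer τ v := Iff.rfl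

lemma grpInv_sup (τ : Representation ℂ G V) (A B : Subgroup G) :
    grpInv τ (A ⊔ B) = grpInv τ A ⊓ grpInv τ B := by
  ext v
  simp only [Submodule.mem_inf, mem_grpInv_iff_le, sup_le_iff]

lemma mem_grpInv_zpowers {τ : Representation ℂ G V} {g : G} {v : V} :
    v ∈ grpInv τ (Subgroup.zpowers g) ↔ τ g v = v := by
  rw [mem_grpInv_iff_le, Subgroup.zpowers_le, mem_vectorStabilizer]

open MeasureTheory in
lemma integral_eq_zero_of_mem_grpCoinvKer [MeasurableSpace G] [MeasurableMul G] (μ : Measure G)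
    [μ.IsMulRightInvariant] {τ : Representation ℂ G V} {ℓ : V →ₗ[ℂ] ℂ}
    (hℓ : ∀ v, Integrable (fun g => ℓ (τ g v)) μ) {w : V} (hw : w ∈ grpCoinvKer τ ⊤) :
    ∫ g, ℓ (τ g w) ∂μ = 0 := by
  induction hw using Submodule.span_induction with
  | mem w hw =>
    obtain ⟨h, -, v, rfl⟩ := hw
    have h_translate : ∫ g, ℓ (τ g (τ h v)) ∂μ = ∫ g, ℓ (τ g v) ∂μ := by
      simp only [← Module.End.mul_apply, ← map_mul]
      exact integral_mul_right_eq_self (fun g => ℓ (τ g v)) h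
    simp only [map_sub]
    rw [integral_sub (hℓ _) (hℓ _), h_translate, sub_self]
  | zero => simp
  | add v w _ _ hv hw =>
    simp only [map_add]
    rw [integral_add (hℓ _) (hℓ _), hv, hw, add_zero]
  | smul c v _ hv =>
    simp only [map_smul]
    rw [integral_smul, hv, smul_zero]

lemma exists_mem_grpInv_top_sub_mem_grpCoinvKer [TopologicalSpace G] [SeparatelyContinuousMul G]
    [CompactSpace G] {τ : Representation ℂ G V} (hτ : IsSmooth τ) (v : V) :
    ∃ a ∈ grpInv τ ⊤, v - a ∈ grpCoinvKer τ ⊤ := by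
  let N : Subgroup G := vectorStabilizer τ v
  have : Finite (G ⧸ N) := Subgroup.quotient_finite_of_isOpen N (hτ v)
  have := Fintype.ofFinite (G ⧸ N)
  have h_card : (Fintype.card (G ⧸ N) : ℂ) ≠ 0 := Nat.cast_ne_zero.2 Fintype.card_ne_zero
  have h_translate (g : G) (q : G ⧸ N) : τ g (τ q.out v) = τ (g • q).out v := by
    obtain ⟨n, hn⟩ := QuotientGroup.mk_out_eq_mul N (g * q.out)
    have h_out : (g • q).out = g * q.out * n := by
      rw [← hn, ← MulAction.Quotient.mk_smul_out, smul_eq_mul]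
    have h_fix : τ n v = v := n.2
    rw [h_out, map_mul, map_mul, Module.End.mul_apply, Module.End.mul_apply, h_fix]
  let a : V := (Fintype.card (G ⧸ N) : ℂ)⁻¹ • ∑ q : G ⧸ N, τ q.out v
  refine ⟨a, fun g _ => ?_, ?_⟩
  · simp only [a, map_smul, map_sum, h_translate]
    rw [(MulAction.bijective g).sum_comp fun q : G ⧸ N => τ q.out v]
  · have h_sum : v - a = -((Fintype.card (G ⧸ N) : ℂ)⁻¹ • ∑ q : G ⧸ N, (τ q.out v - v)) := by
      rw [Finset.sum_sub_distrib, Finset.sum_const, Finset.card_univ, smul_sub,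
        ← Nat.cast_smul_eq_nsmul ℂ, inv_smul_smul₀ h_card, neg_sub]
    rw [h_sum]
    exact Submodule.neg_mem _ (Submodule.smul_mem _ _ (Submodule.sum_mem _ fun q _ =>
      apply_sub_mem_grpCoinvKer τ (Subgroup.mem_top _) v))

lemma IsSmooth.isLocallyConstant [TopologicalSpace G] [SeparatelyContinuousMul G]
    {τ : Representation ℂ G V} (hτ : IsSmooth τ) (v : V) : IsLocallyConstant fun g => τ g v := by
  refine (IsLocallyConstant.iff_eventually_eq _).2 fun g => ?_
  have h_nhds : {h | τ h v = v} ∈ nhds (g⁻¹ * g) := (hτ v).mem_nhds (by simp)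
  filter_upwards [(continuous_const_mul g⁻¹).continuousAt.preimage_mem_nhds h_nhds] with h hh
  replace hh : τ (g⁻¹ * h) v = v := hh
  rw [← congrArg (τ g) hh, ← Module.End.mul_apply, ← map_mul, mul_inv_cancel_left]

open MeasureTheory in
theorem isCompl_grpInv_grpCoinvKer_top [TopologicalSpace G] [IsTopologicalGroup G]
    [CompactSpace G] {τ : Representation ℂ G V} (hτ : IsSmooth τ) :
    IsCompl (grpInv τ ⊤) (grpCoinvKer τ ⊤) := by
  refine IsCompl.of_eq ((Submodule.eq_bot_iff _).2 ?_) (eq_top_iff.2 fun v _ => ?_)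
  · rintro w ⟨h_inv, h_coinv⟩
    borelize G
    let μ : Measure G := Measure.haar.inv
    refine (Module.forall_dual_apply_eq_zero_iff ℂ w).1 fun ℓ => ?_
    have h_int (v : V) : Integrable (fun g => ℓ (τ g v)) μ :=
      ((hτ.isLocallyConstant v).comp ℓ).continuous.integrable_of_hasCompactSupport
        (HasCompactSupport.of_compactSpace _)
    have h_zero := integral_eq_zero_of_mem_grpCoinvKer μ h_int h_coinv
    simp only [h_inv _ (Subgroup.mem_top _), integral_const] at h_zero
    refine (smul_eq_zero.1 h_zero).resolve_left ?_
    exact (measureReal_ne_zero_iff (measure_ne_top μ _)).2 (NeZero.ne _)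
  · obtain ⟨a, ha, hva⟩ := exists_mem_grpInv_top_sub_mem_grpCoinvKer hτ v
    exact Submodule.mem_sup.2 ⟨a, ha, v - a, hva, add_sub_cancel a v⟩

lemma grpCoinvKer_comp_subtype (τ : Representation ℂ G V) (H : Subgroup G) :
    grpCoinvKer (τ.comp H.subtype) ⊤ = grpCoinvKer τ H := by
  simp [grpCoinvKer]

lemma grpInv_comp_subtype (τ : Representation ℂ G V) (H : Subgroup G) :
    grpInv (τ.comp H.subtype) ⊤ = grpInv τ H := by
  ext v
  simp

theorem isCompl_grpInv_grpCoinvKer [TopologicalSpace G] [IsTopologicalGroup G]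
    {τ : Representation ℂ G V} (hτ : IsSmooth τ) {H : Subgroup G}
    (hH : IsCompact (H : Set G)) : IsCompl (grpInv τ H) (grpCoinvKer τ H) := by
  have : CompactSpace H := isCompact_iff_compactSpace.1 hH
  rw [← grpInv_comp_subtype, ← grpCoinvKer_comp_subtype]
  exact isCompl_grpInv_grpCoinvKer_top fun v => (hτ v).preimage continuous_subtype_val

end SmoothRepresentations

section Twist

variable {G : Type*} [Group G] {V : Type*} [AddCommGroup V] [Module ℂ V]

/-- The twist `τ ⊗ χ⁻¹`: its invariants are the `χ`-eigenvectors of `τ`, and its coinvariants are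
the `χ`-coinvariants of `τ`. -/
def twist (τ : Representation ℂ G V) (χ : G →* ℂˣ) : Representation ℂ G V where
  toFun g := (χ g : ℂ)⁻¹ • τ g
  map_one' := by simp
  map_mul' g h := by
    rw [map_mul, map_mul, Units.val_mul, mul_inv, smul_mul_smul_comm]

lemma twist_apply (τ : Representation ℂ G V) (χ : G →* ℂˣ) (g : G) (v : V) :
    twist τ χ g v = (χ g : ℂ)⁻¹ • τ g v := rfl

lemma mem_grpInv_twist {τ : Representation ℂ G V} {χ : G →* ℂˣ} {N : Subgroup G} {v : V} :
    v ∈ grpInv (twist τ χ) N ↔ ∀ g ∈ N, τ g v = (χ g : ℂ) • v := by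
  simp only [mem_grpInv, twist_apply, inv_smul_eq_iff₀ (Units.ne_zero _)]

lemma grpCoinvKer_twist (τ : Representation ℂ G V) (χ : G →* ℂˣ) (N : Subgroup G) :
    grpCoinvKer (twist τ χ) N =
      Submodule.span ℂ {w | ∃ g ∈ N, ∃ v, w = τ g v - (χ g : ℂ) • v} := by
  rw [grpCoinvKer]
  congr 1
  ext w
  refine exists_congr fun g => and_congr_right fun _ => ⟨?_, ?_⟩
  · rintro ⟨v, rfl⟩
    exact ⟨(χ g : ℂ)⁻¹ • v, by rw [map_smul, smul_inv_smul₀ (Units.ne_zero _), twist_apply]⟩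
  · rintro ⟨v, rfl⟩
    exact ⟨(χ g : ℂ) • v, by rw [twist_apply, map_smul, inv_smul_smul₀ (Units.ne_zero _)]⟩

lemma IsSmooth.of_stabilizer_le [TopologicalSpace G] [ContinuousMul G] {W : Type*}
    [AddCommGroup W] [Module ℂ W] {τ : Representation ℂ G V} (hτ : IsSmooth τ)
    {σ : Representation ℂ G W} (h : ∀ w, ∃ v, ∀ g, τ g v = v → σ g w = w) : IsSmooth σ := by
  intro w
  obtain ⟨v, hv⟩ := h w
  exact Subgroup.isOpen_mono (H₁ := vectorStabilizer τ v) (H₂ := vectorStabilizer σ w) hv (hτ v)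

lemma IsSmooth.twist [TopologicalSpace G] [ContinuousMul G] {τ : Representation ℂ G V}
    (hτ : IsSmooth τ) {χ : G →* ℂˣ} (hχ : IsOpen {g | χ g = 1}) : IsSmooth (twist τ χ) := by
  intro v
  refine Subgroup.isOpen_mono (H₁ := vectorStabilizer τ v ⊓ χ.ker)
    (H₂ := vectorStabilizer (PSW.twist τ χ) v) ?_ ((hτ v).inter hχ)
  rintro g ⟨hg, hχg⟩
  rw [mem_vectorStabilizer, twist_apply, MonoidHom.mem_ker.1 hχg, Units.val_one, inv_one, one_smul]
  exact hg

lemma GRep.Iso.twist {W : Type*} [AddCommGroup W] [Module ℂ W] {τ : Representation ℂ G V}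
    {σ : Representation ℂ G W} (h : GRep.Iso τ σ) (χ : G →* ℂˣ) :
    GRep.Iso (twist τ χ) (twist σ χ) := by
  obtain ⟨e, he⟩ := h
  exact ⟨e, fun g v => by rw [twist_apply, twist_apply, map_smul, he]⟩

end Twist

section InvariantsOfCompact

variable {G : Type*} [Group G] {U V W : Type*} [AddCommGroup U] [Module ℂ U]
  [AddCommGroup V] [Module ℂ V] [AddCommGroup W] [Module ℂ W]
  {σ : Representation ℂ G U} {τ : Representation ℂ G V} {υ : Representation ℂ G W}

lemma grpCoinvKer_zpowers (τ : Representation ℂ G V) (g : G) :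
    grpCoinvKer τ (Subgroup.zpowers g) = LinearMap.range (τ g - 1) := by
  refine le_antisymm (grpCoinvKer_le_iff.2 (Subgroup.zpowers_le.2 fun v => ⟨v, rfl⟩)) ?_
  rintro _ ⟨v, rfl⟩
  exact apply_sub_mem_grpCoinvKer τ (Subgroup.mem_zpowers g) v

lemma exact_grpInvRestrict {N : Subgroup G} {i : U →ₗ[ℂ] V} {p : V →ₗ[ℂ] W}
    (hiσ : GRep.Equivariant σ τ i) (hpτ : GRep.Equivariant τ υ p) (hi : Function.Injective i)
    (hip : Function.Exact i p) :
    Function.Exact (grpInvRestrict σ τ N i hiσ) (grpInvRestrict τ υ N p hpτ) := by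
  rintro ⟨v, hv⟩
  constructor
  · intro hpv
    obtain ⟨u, rfl⟩ := (hip v).1 (congrArg Subtype.val hpv)
    exact ⟨⟨u, fun n hn => hi (by rw [hiσ, hv n hn])⟩, rfl⟩
  · rintro ⟨u, hu⟩
    exact Subtype.ext ((hip v).2 ⟨u, congrArg Subtype.val hu⟩)

variable [TopologicalSpace G] [IsTopologicalGroup G] {N : Subgroup G}

lemma exists_mem_grpInv_sub_mem_grpCoinvKer (hτ : IsSmooth τ) (hN : IsCompact (N : Set G)) (v : V) :
    ∃ a ∈ grpInv τ N, v - a ∈ grpCoinvKer τ N := by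
  obtain ⟨a, ha, w, hw, rfl⟩ :=
    Submodule.mem_sup.1 ((isCompl_grpInv_grpCoinvKer hτ hN).sup_eq_top ▸ Submodule.mem_top (x := v))
  exact ⟨a, ha, by rwa [add_sub_cancel_left]⟩

lemma eq_zero_of_mem_grpInv_of_mem_grpCoinvKer (hτ : IsSmooth τ) (hN : IsCompact (N : Set G))
    {v : V} (h_inv : v ∈ grpInv τ N) (h_coinv : v ∈ grpCoinvKer τ N) : v = 0 :=
  Submodule.disjoint_def.1 (isCompl_grpInv_grpCoinvKer hτ hN).disjoint v h_inv h_coinv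

lemma grpInvRestrict_surjective (hτ : IsSmooth τ) (hυ : IsSmooth υ) (hN : IsCompact (N : Set G))
    {p : V →ₗ[ℂ] W} (hpτ : GRep.Equivariant τ υ p) (hp : Function.Surjective p) :
    Function.Surjective (grpInvRestrict τ υ N p hpτ) := by
  rintro ⟨w, hw⟩
  obtain ⟨v, rfl⟩ := hp w
  obtain ⟨a, ha, hva⟩ := exists_mem_grpInv_sub_mem_grpCoinvKer hτ hN v
  refine ⟨⟨a, ha⟩, Subtype.ext (sub_eq_zero.1 ?_).symm⟩
  refine eq_zero_of_mem_grpInv_of_mem_grpCoinvKer hυ hN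
    (Submodule.sub_mem _ hw (grpInvRestrict τ υ N p hpτ ⟨a, ha⟩).2) ?_
  change p v - p a ∈ _
  rw [← map_sub]
  exact grpCoinvKer_le_comap τ υ N p hpτ hva

end InvariantsOfCompact

section CoinvariantExcess

variable {G : Type*} [CommGroup G] {U V W : Type*} [AddCommGroup U] [Module ℂ U]
  [AddCommGroup V] [Module ℂ V] [AddCommGroup W] [Module ℂ W]
  {σ : Representation ℂ G U} {τ : Representation ℂ G V} {υ : Representation ℂ G W}

/-- `HasCoinvariantExcess τ n` says that the invariants and the coinvariants of `τ` are
finite-dimensional, and that the dimension of the coinvariants exceeds that of the invariants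
by `n`. -/
def HasCoinvariantExcess {G : Type*} [Group G] (τ : Representation ℂ G V) (n : ℕ) : Prop :=
  Module.Finite ℂ (grpInv τ ⊤) ∧ Module.Finite ℂ (V ⧸ grpCoinvKer τ ⊤) ∧
    Module.finrank ℂ (V ⧸ grpCoinvKer τ ⊤) = Module.finrank ℂ (grpInv τ ⊤) + n

lemma map_grpInv (e : V ≃ₗ[ℂ] W) (he : GRep.Equivariant τ υ e) (N : Subgroup G) :
    (grpInv τ N).map (e : V →ₗ[ℂ] W) = grpInv υ N := by
  ext w
  simp only [Submodule.mem_map_equiv, mem_grpInv]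
  refine forall₂_congr fun g _ => ?_
  rw [← e.injective.eq_iff, ← LinearEquiv.coe_coe, he, LinearEquiv.coe_coe, e.apply_symm_apply]

lemma map_grpCoinvKer (e : V ≃ₗ[ℂ] W) (he : GRep.Equivariant τ υ e) (N : Subgroup G) :
    (grpCoinvKer τ N).map (e : V →ₗ[ℂ] W) = grpCoinvKer υ N := by
  refine le_antisymm (Submodule.map_le_iff_le_comap.2 (grpCoinvKer_le_comap τ υ N e he)) ?_
  refine Submodule.span_le.2 ?_
  rintro _ ⟨g, hg, w, rfl⟩
  refine ⟨_, apply_sub_mem_grpCoinvKer τ hg (e.symm w), ?_⟩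
  rw [map_sub, he, LinearEquiv.coe_coe, e.apply_symm_apply]

theorem HasCoinvariantExcess.of_iso {n : ℕ} (hn : HasCoinvariantExcess υ n)
    (h_iso : GRep.Iso τ υ) : HasCoinvariantExcess τ n := by
  obtain ⟨e, he⟩ := h_iso
  have e_inv : grpInv τ ⊤ ≃ₗ[ℂ] grpInv υ ⊤ :=
    (e.submoduleMap _).trans (LinearEquiv.ofEq _ _ (map_grpInv e he ⊤))
  have e_coinv : (V ⧸ grpCoinvKer τ ⊤) ≃ₗ[ℂ] W ⧸ grpCoinvKer υ ⊤ :=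
    Submodule.Quotient.equiv _ _ e (map_grpCoinvKer e he ⊤)
  rwa [HasCoinvariantExcess, Module.Finite.equiv_iff e_inv, Module.Finite.equiv_iff e_coinv,
    e_inv.finrank_eq, e_coinv.finrank_eq]

/-- The endomorphism `τ g - 1` of the `N`-invariants. -/
def subOneOnInv (τ : Representation ℂ G V) (N : Subgroup G) (g : G) :
    grpInv τ N →ₗ[ℂ] grpInv τ N :=
  (τ g - 1).restrict fun v hv => Submodule.sub_mem _ (grpInv_invariant τ N g v hv) hv

lemma coe_subOneOnInv (N : Subgroup G) (g : G) (v : grpInv τ N) :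
    (subOneOnInv τ N g v : V) = τ g v - v := rfl

lemma map_subtype_ker_subOneOnInv {N : Subgroup G} {g : G} (hg : N ⊔ Subgroup.zpowers g = ⊤) :
    (LinearMap.ker (subOneOnInv τ N g)).map (grpInv τ N).subtype = grpInv τ ⊤ := by
  rw [← hg, grpInv_sup]
  ext v
  rw [Submodule.mem_inf, mem_grpInv_zpowers]
  constructor
  · rintro ⟨w, hw, rfl⟩
    exact ⟨w.2, sub_eq_zero.1 (congrArg Subtype.val hw)⟩
  · rintro ⟨hN, hv⟩
    exact ⟨⟨v, hN⟩, Subtype.ext (sub_eq_zero.2 hv), rfl⟩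

variable [TopologicalSpace G] [IsTopologicalGroup G] {N : Subgroup G}

lemma ker_mkQ_comp_subtype_grpInv (hτ : IsSmooth τ) (hN : IsCompact (N : Set G)) {g : G}
    (hg : N ⊔ Subgroup.zpowers g = ⊤) :
    LinearMap.ker ((grpCoinvKer τ ⊤).mkQ ∘ₗ (grpInv τ N).subtype) =
      LinearMap.range (subOneOnInv τ N g) := by
  rw [LinearMap.ker_comp, Submodule.ker_mkQ]
  ext a
  rw [Submodule.mem_comap, Submodule.subtype_apply]
  constructor
  · intro ha
    rw [← hg, grpCoinvKer_sup, grpCoinvKer_zpowers] at ha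
    obtain ⟨w, hw, _, ⟨x, rfl⟩, hwx⟩ := Submodule.mem_sup.1 ha
    obtain ⟨b, hb, hxb⟩ := exists_mem_grpInv_sub_mem_grpCoinvKer hτ hN x
    refine ⟨⟨b, hb⟩, (sub_eq_zero.1 ?_).symm⟩
    refine Subtype.ext (eq_zero_of_mem_grpInv_of_mem_grpCoinvKer hτ hN (Subtype.prop _) ?_)
    have h_diff : (a : V) - (τ g b - b) = w + (τ g (x - b) - (x - b)) := by
      rw [← hwx, LinearMap.sub_apply, Module.End.one_apply, map_sub]
      abel
    rw [Submodule.coe_sub, coe_subOneOnInv, h_diff]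
    exact Submodule.add_mem _ hw
      (Submodule.sub_mem _ (grpCoinvKer_invariant τ N g _ hxb) hxb)
  · rintro ⟨b, rfl⟩
    exact apply_sub_mem_grpCoinvKer τ (Subgroup.mem_top g) b

theorem hasCoinvariantExcess_iff_hasCoindex (hτ : IsSmooth τ) (hN : IsCompact (N : Set G)) {g : G}
    (hg : N ⊔ Subgroup.zpowers g = ⊤) {n : ℕ} :
    HasCoinvariantExcess τ n ↔ HasCoindex (subOneOnInv τ N g) n := by
  have h_surj : Function.Surjective ((grpCoinvKer τ ⊤).mkQ ∘ₗ (grpInv τ N).subtype) := by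
    intro v
    obtain ⟨v, rfl⟩ := Submodule.Quotient.mk_surjective _ v
    obtain ⟨a, ha, hva⟩ := exists_mem_grpInv_sub_mem_grpCoinvKer hτ hN v
    exact ⟨⟨a, ha⟩, ((Submodule.Quotient.eq _).2 (grpCoinvKer_mono τ le_top hva)).symm⟩
  let e_inv : LinearMap.ker (subOneOnInv τ N g) ≃ₗ[ℂ] grpInv τ ⊤ :=
    (Submodule.equivSubtypeMap _ _).trans (LinearEquiv.ofEq _ _ (map_subtype_ker_subOneOnInv hg))
  let e_coinv : (grpInv τ N ⧸ LinearMap.range (subOneOnInv τ N g)) ≃ₗ[ℂ] V ⧸ grpCoinvKer τ ⊤ :=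
    (Submodule.quotEquivOfEq _ _ (ker_mkQ_comp_subtype_grpInv hτ hN hg).symm).trans
      (LinearMap.quotKerEquivOfSurjective _ h_surj)
  rw [HasCoinvariantExcess, HasCoindex, e_inv.finrank_eq, e_coinv.finrank_eq,
    Module.Finite.equiv_iff e_inv, Module.Finite.equiv_iff e_coinv]

theorem HasCoinvariantExcess.of_exact (hN : IsCompact (N : Set G)) {g : G}
    (hg : N ⊔ Subgroup.zpowers g = ⊤) (hσ : IsSmooth σ) (hτ : IsSmooth τ) (hυ : IsSmooth υ)
    {i : U →ₗ[ℂ] V} {p : V →ₗ[ℂ] W} (hiσ : GRep.Equivariant σ τ i)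
    (hpτ : GRep.Equivariant τ υ p) (hi : Function.Injective i) (hip : Function.Exact i p)
    (hp : Function.Surjective p) {m n : ℕ} (hm : HasCoinvariantExcess σ m)
    (hn : HasCoinvariantExcess υ n) : HasCoinvariantExcess τ (m + n) := by
  have h_exact := exact_grpInvRestrict (N := N) hiσ hpτ hi hip
  have h_surj := grpInvRestrict_surjective hτ hυ hN hpτ hp
  have h_inj : Function.Injective (grpInvRestrict σ τ N i hiσ) :=
    fun a b hab => Subtype.ext (hi (congrArg Subtype.val hab))
  refine (hasCoinvariantExcess_iff_hasCoindex hτ hN hg).2 (HasCoindex.of_exact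
    ((hasCoinvariantExcess_iff_hasCoindex hσ hN hg).1 hm)
    ((hasCoinvariantExcess_iff_hasCoindex hυ hN hg).1 hn)
    h_surj h_exact h_inj h_surj h_exact h_inj ?_ ?_)
  · ext u
    change τ g (i u) - i u = i (σ g u - u)
    rw [map_sub, hiσ]
  · ext v
    change υ g (p v) - p v = p (τ g v - v)
    rw [map_sub, hpτ]

lemma hasCoinvariantExcess_zero_of_finite [Module.Finite ℂ V] (hN : IsCompact (N : Set G)) {g : G}
    (hg : N ⊔ Subgroup.zpowers g = ⊤) (hτ : IsSmooth τ) : HasCoinvariantExcess τ 0 :=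
  (hasCoinvariantExcess_iff_hasCoindex hτ hN hg).2 (hasCoindex_zero_of_finite _)

end CoinvariantExcess

section LocalField

variable {K : Type*} [NontriviallyNormedField K]

/-- The group of elements of `K` of norm one. -/
def normOneUnits (K : Type*) [NontriviallyNormedField K] : Subgroup Kˣ :=
  ((normHom : K →*₀ ℝ).toMonoidHom.comp (Units.coeHom K)).ker

@[simp] lemma mem_normOneUnits {u : Kˣ} : u ∈ normOneUnits K ↔ ‖(u : K)‖ = 1 := Iff.rfl

/-- The ball `{b | ‖b‖ ≤ r}`, as a subgroup of `S ≅ (K, +)` written multiplicatively. -/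
def ballSubgroup (K : Type*) [NontriviallyNormedField K] [IsUltrametricDist K] (r : NNReal) :
    Subgroup (Multiplicative K) where
  carrier := {b | ‖b.toAdd‖ ≤ r}
  one_mem' := by
    rw [Set.mem_ofPred_eq, toAdd_one, norm_zero]
    exact r.2
  mul_mem' {a b} ha hb :=
    (IsUltrametricDist.norm_add_le_max a.toAdd b.toAdd).trans (max_le ha hb)
  inv_mem' {a} ha := by rwa [Set.mem_ofPred_eq, toAdd_inv, norm_neg]

@[simp] lemma mem_ballSubgroup [IsUltrametricDist K] {r : NNReal} {b : Multiplicative K} :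
    b ∈ ballSubgroup K r ↔ ‖b.toAdd‖ ≤ r := Iff.rfl

lemma ballSubgroup_mono [IsUltrametricDist K] : Monotone (ballSubgroup K) :=
  fun _ _ h _ hb => le_trans (mem_ballSubgroup.1 hb) (NNReal.coe_le_coe.2 h)

lemma isClopen_normOneUnits [IsUltrametricDist K] : IsClopen (normOneUnits K : Set Kˣ) := by
  convert (IsUltrametricDist.isClopen_sphere (0 : K) one_ne_zero).preimage Units.continuous_val
    using 1
  ext u
  simp

lemma isCompact_ballSubgroup [IsUltrametricDist K] [ProperSpace K] (r : NNReal) :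
    IsCompact (ballSubgroup K r : Set (Multiplicative K)) := by
  convert (isCompact_closedBall (0 : K) r).image continuous_ofAdd
  ext b
  simp

lemma isCompact_setOf_norm_mem_Icc [ProperSpace K] {δ : ℝ} (hδ : 0 < δ) (R : ℝ) :
    IsCompact {u : Kˣ | ‖(u : K)‖ ∈ Set.Icc δ R} := by
  have h_image : ((↑) : Kˣ → K) '' {u | ‖(u : K)‖ ∈ Set.Icc δ R} =
      {x | δ ≤ ‖x‖} ∩ Metric.closedBall 0 R := by
    ext x
    rw [Set.mem_inter_iff, mem_closedBall_zero_iff]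
    refine ⟨?_, fun hx => ?_⟩
    · rintro ⟨u, hu, rfl⟩
      exact hu
    · exact ⟨Units.mk0 x (norm_pos_iff.1 (hδ.trans_le hx.1)), hx, rfl⟩
  rw [Units.isEmbedding_val₀.isCompact_iff, h_image]
  exact (isCompact_closedBall 0 R).inter_left (isClosed_le continuous_const continuous_norm)

lemma isCompact_normOneUnits (K : Type*) [NontriviallyNormedField K] [ProperSpace K] :
    IsCompact (normOneUnits K : Set Kˣ) := by
  convert isCompact_setOf_norm_mem_Icc (K := K) one_pos 1
  ext u
  simp

lemma exists_normOneUnits_sup_zpowers_eq_top (K : Type*) [NontriviallyNormedField K]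
    [IsUltrametricDist K] [ProperSpace K] :
    ∃ ϖ : Kˣ, normOneUnits K ⊔ Subgroup.zpowers ϖ = ⊤ := by
  have h_compact : IsCompact (Metric.ball (0 : K) 1) :=
    (isCompact_closedBall (0 : K) 1).of_isClosed_subset (IsUltrametricDist.isClosed_ball _ _)
      Metric.ball_subset_closedBall
  obtain ⟨p, hp, h_max⟩ := h_compact.exists_isMaxOn ⟨0, by simp⟩ continuous_norm.continuousOn
  replace h_max (x : K) (hx : ‖x‖ < 1) : ‖x‖ ≤ ‖p‖ := h_max (mem_ball_zero_iff.2 hx)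
  obtain ⟨z, hz0, hz1⟩ := NormedField.exists_norm_lt_one K
  have hp0 : 0 < ‖p‖ := hz0.trans_le (h_max z hz1)
  have hp1 : ‖p‖ < 1 := mem_ball_zero_iff.1 hp
  let ϖ : Kˣ := Units.mk0 p (norm_pos_iff.1 hp0)
  refine ⟨ϖ, eq_top_iff.2 fun u _ => ?_⟩
  obtain ⟨n, hn1, hn2⟩ :=
    exists_mem_Ioc_zpow (norm_pos_iff.2 u.ne_zero) ((one_lt_inv₀ hp0).2 hp1)
  have h_norm : ‖((u * ϖ ^ (n + 1) : Kˣ) : K)‖ = ‖(u : K)‖ * ‖p‖ ^ (n + 1) := by simp [ϖ]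
  have h_le : ‖((u * ϖ ^ (n + 1) : Kˣ) : K)‖ ≤ 1 := by
    rw [h_norm]
    rwa [inv_zpow, ← one_div, le_div_iff₀ (zpow_pos hp0 _)] at hn2
  have h_lt : ‖p‖ < ‖((u * ϖ ^ (n + 1) : Kˣ) : K)‖ := by
    rw [h_norm, zpow_add_one₀ hp0.ne', ← mul_assoc]
    rw [inv_zpow, ← one_div, div_lt_iff₀ (zpow_pos hp0 _)] at hn1
    exact lt_mul_of_one_lt_left hp0 hn1
  have h_mem : u * ϖ ^ (n + 1) ∈ normOneUnits K :=
    h_le.eq_of_not_lt fun h => (h_max _ h).not_gt h_lt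
  exact Subgroup.mem_sup.2
    ⟨_, h_mem, ϖ ^ (-(n + 1)), Subgroup.zpow_mem_zpowers ϖ _,
      by rw [zpow_neg, mul_inv_cancel_right]⟩

lemma exists_pos_forall_norm_le_of_isOpen {s : Set K} (hs : IsOpen s) (h0 : (0 : K) ∈ s) :
    ∃ ε > 0, ∀ b : K, ‖b‖ ≤ ε → b ∈ s := by
  obtain ⟨ε, hε, h⟩ := Metric.nhds_basis_closedBall.mem_iff.1 (hs.mem_nhds h0)
  exact ⟨ε, hε, fun b hb => h (mem_closedBall_zero_iff.2 hb)⟩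

lemma exists_pos_forall_norm_le_addChar_eq_one {ψ : AddChar K ℂ} (hψ : IsLocallyConstant ψ) :
    ∃ ε > 0, ∀ b : K, ‖b‖ ≤ ε → ψ b = 1 :=
  exists_pos_forall_norm_le_of_isOpen (hψ.isOpen_fiber 1) (ψ.map_zero_eq_one)

end LocalField

section AffineRepresentations

open Aff

variable {K : Type*} {V : Type*} [AddCommGroup V] [Module ℂ V]

/-- The group `S ≅ (K, +)` as a subgroup of `TS`. -/
def sSHom [Field K] : Multiplicative K →* Aff K where
  toFun b := sS b.toAdd
  map_one' := rfl
  map_mul' a b := by ext <;> simp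

lemma continuous_t [Field K] [TopologicalSpace K] : Continuous (Aff.t : Aff K → Kˣ) :=
  continuous_fst.comp (continuous_induced_dom (f := fun g : Aff K => (g.t, g.s)))

lemma continuous_s [Field K] [TopologicalSpace K] : Continuous (Aff.s : Aff K → K) :=
  continuous_snd.comp (continuous_induced_dom (f := fun g : Aff K => (g.t, g.s)))

instance [Field K] [TopologicalSpace K] [IsTopologicalRing K] : IsTopologicalGroup (Aff K) := by
  have h_t := continuous_t (K := K)
  have h_s := continuous_s (K := K)
  refine { continuous_mul := ?_, continuous_inv := ?_ } <;>
  · refine continuous_induced_rng.2 ?_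
    simp only [Function.comp_def, mul_t, mul_s, inv_t, inv_s]
    fun_prop

lemma continuous_xT [Field K] [TopologicalSpace K] : Continuous (xT : Kˣ → Aff K) :=
  continuous_induced_rng.2 (continuous_id.prodMk continuous_const)

lemma continuous_sS [Field K] [TopologicalSpace K] : Continuous (sS : K → Aff K) :=
  continuous_induced_rng.2 (continuous_const.prodMk continuous_id)

lemma apply_xT_apply_sS [Field K] (ρ : Rep K V) (u : Kˣ) (b : K) (v : V) :
    ρ (xT u) (ρ (sS b) v) = ρ (sS (u * b)) (ρ (xT u) v) := by
  rw [← Module.End.mul_apply, ← map_mul, mul_sS, map_mul, Module.End.mul_apply, xT_t]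

lemma apply_eq_apply_sS_apply_xT [Field K] (ρ : Rep K V) (g : Aff K) (v : V) :
    ρ g v = ρ (sS g.s) (ρ (xT g.t) v) := by
  rw [← Module.End.mul_apply, ← map_mul]
  congr 2
  ext <;> simp

lemma tEigen_eq_grpInv [Field K] (ρ : Rep K V) (χ : Kˣ →* ℂˣ) :
    tEigen ρ χ = grpInv (twist (ρ.comp xTHom) χ) ⊤ := by
  ext v
  rw [mem_grpInv_twist]
  simp [tEigen]

lemma tTwistKer_eq_grpCoinvKer [Field K] (ρ : Rep K V) (χ : Kˣ →* ℂˣ) :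
    tTwistKer ρ χ = grpCoinvKer (twist (ρ.comp xTHom) χ) ⊤ := by
  simp [grpCoinvKer_twist, tTwistKer, tTwistKerT]

/-- The restriction of `ρ ⊗ ψ'⁻¹` to `S`. -/
def sTwistRep [Field K] (ρ : Rep K V) (ψ' : AddChar K ℂ) :
    Representation ℂ (Multiplicative K) V :=
  twist (ρ.comp sSHom) ψ'.toMonoidHom.toHomUnits

lemma mem_grpInv_sTwistRep [Field K] {ρ : Rep K V} {ψ' : AddChar K ℂ}
    {N : Subgroup (Multiplicative K)} {v : V} :
    v ∈ grpInv (sTwistRep ρ ψ') N ↔ ∀ b, .ofAdd b ∈ N → ρ (sS b) v = ψ' b • v :=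
  mem_grpInv_twist

lemma grpCoinvKer_sTwistRep [Field K] (ρ : Rep K V) (ψ' : AddChar K ℂ)
    (N : Subgroup (Multiplicative K)) : grpCoinvKer (sTwistRep ρ ψ') N =
      Submodule.span ℂ {w | ∃ b, .ofAdd b ∈ N ∧ ∃ v, w = ρ (sS b) v - ψ' b • v} :=
  grpCoinvKer_twist _ _ _

lemma grpCoinvKer_sTwistRep_congr [Field K] {ρ : Rep K V} {ψ₁ ψ₂ : AddChar K ℂ}
    {N : Subgroup (Multiplicative K)} (h : ∀ b, .ofAdd b ∈ N → ψ₁ b = ψ₂ b) :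
    grpCoinvKer (sTwistRep ρ ψ₁) N = grpCoinvKer (sTwistRep ρ ψ₂) N := by
  simp only [grpCoinvKer_sTwistRep]
  congr 1
  ext w
  exact exists_congr fun b => and_congr_right fun hb => by rw [h b hb]

lemma sTwistKer_eq_grpCoinvKer [Field K] (ρ : Rep K V) (ψ' : AddChar K ℂ) :
    sTwistKer ρ ψ' = grpCoinvKer (sTwistRep ρ ψ') ⊤ := by
  simp [grpCoinvKer_sTwistRep, sTwistKer]

lemma sTwistKer_le_comap [Field K] {W : Type*} [AddCommGroup W] [Module ℂ W] {ρ : Rep K V}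
    {σ : Rep K W} {f : V →ₗ[ℂ] W} (hf : GRep.Equivariant ρ σ f) (ψ' : AddChar K ℂ) :
    sTwistKer ρ ψ' ≤ (sTwistKer σ ψ').comap f := by
  refine Submodule.span_le.2 ?_
  rintro _ ⟨b, v, rfl⟩
  exact Submodule.subset_span ⟨b, f v, by rw [map_sub, map_smul, hf]⟩

lemma sCoinvKer_eq_bot_iff [Field K] {ρ : Rep K V} : sCoinvKer ρ = ⊥ ↔ sInv ρ = ⊤ := by
  simp only [sCoinvKer, Submodule.span_eq_bot, Submodule.eq_top_iff', mem_sInv]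
  constructor
  · exact fun h v b => sub_eq_zero.1 (h _ ⟨b, v, rfl⟩)
  · rintro h _ ⟨b, v, rfl⟩
    exact sub_eq_zero.2 (h v b)

lemma sTwistKer_one [Field K] (ρ : Rep K V) : sTwistKer ρ 1 = sCoinvKer ρ := by
  simp [sTwistKer, sCoinvKer]

lemma sTwistKer_mulShift_eq_top [Field K] {ρ : Rep K V} {ψ' : AddChar K ℂ}
    (h_top : sTwistKer ρ ψ' = ⊤) (u : Kˣ) : sTwistKer ρ (ψ'.mulShift u) = ⊤ := by
  have h_le : sTwistKer ρ ψ' ≤ (sTwistKer ρ (ψ'.mulShift u)).comap (ρ (xT u⁻¹)) := by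
    refine Submodule.span_le.2 ?_
    rintro _ ⟨b, v, rfl⟩
    refine Submodule.subset_span ⟨u⁻¹ * b, ρ (xT u⁻¹) v, ?_⟩
    simp [apply_xT_apply_sS]
  refine eq_top_iff.2 fun v _ => ?_
  have hv : ρ (xT u) v ∈ sTwistKer ρ ψ' := h_top ▸ Submodule.mem_top
  have h_inv : ρ (xT u⁻¹) (ρ (xT u) v) = v := Representation.inv_self_apply (ρ.comp xTHom) u v
  exact h_inv ▸ h_le hv

lemma SmoothMulChar.isLocallyConstant [NontriviallyNormedField K] {χ : Kˣ →* ℂˣ}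
    (hχ : SmoothMulChar χ) : IsLocallyConstant χ := by
  refine (IsLocallyConstant.iff_eventually_eq _).2 fun u => ?_
  have h_nhds : {v | χ v = 1} ∈ nhds (u⁻¹ * u) := hχ.mem_nhds (by simp)
  filter_upwards [(continuous_const_mul u⁻¹).continuousAt.preimage_mem_nhds h_nhds] with v hv
  replace hv : χ (u⁻¹ * v) = 1 := hv
  rw [map_mul, map_inv, inv_mul_eq_one] at hv
  exact hv.symm

lemma isSmooth_comp_xTHom [NontriviallyNormedField K] {ρ : Rep K V} (hρ : IsSmoothRep ρ) :
    IsSmooth (ρ.comp xTHom) :=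
  fun v => (hρ v).preimage continuous_xT

lemma isSmooth_twist_comp_xTHom [NontriviallyNormedField K] {ρ : Rep K V} (hρ : IsSmoothRep ρ)
    {χ : Kˣ →* ℂˣ} (hχ : SmoothMulChar χ) : IsSmooth (twist (ρ.comp xTHom) χ) :=
  (isSmooth_comp_xTHom hρ).twist hχ

lemma isSmooth_comp_sSHom [NontriviallyNormedField K] {ρ : Rep K V} (hρ : IsSmoothRep ρ) :
    IsSmooth (ρ.comp sSHom) :=
  fun v => (hρ v).preimage (continuous_sS.comp continuous_toAdd)

lemma isSmooth_sTwistRep [NontriviallyNormedField K] {ρ : Rep K V} (hρ : IsSmoothRep ρ)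
    {ψ' : AddChar K ℂ} (hψ' : IsLocallyConstant ψ') : IsSmooth (sTwistRep ρ ψ') := by
  refine (isSmooth_comp_sSHom hρ).twist ?_
  simp only [Units.ext_iff]
  exact (hψ'.isOpen_fiber 1).preimage continuous_toAdd

lemma exists_pos_forall_norm_le_apply_sS_eq [NontriviallyNormedField K] {ρ : Rep K V}
    (hρ : IsSmoothRep ρ) (v : V) : ∃ ε > 0, ∀ b : K, ‖b‖ ≤ ε → ρ (sS b) v = v := by
  refine exists_pos_forall_norm_le_of_isOpen ((hρ v).preimage continuous_sS) ?_
  exact LinearMap.congr_fun (map_one ρ) v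

lemma exists_mem_grpCoinvKer_ballSubgroup [NontriviallyNormedField K] [IsUltrametricDist K]
    {σ : Representation ℂ (Multiplicative K) V} {w : V} (hw : w ∈ grpCoinvKer σ ⊤) :
    ∃ r, w ∈ grpCoinvKer σ (ballSubgroup K r) := by
  have h_directed : Directed (· ≤ ·) fun r => grpCoinvKer σ (ballSubgroup K r) :=
    ((grpCoinvKer_mono σ).comp ballSubgroup_mono).directed_le
  rw [← Submodule.mem_iSup_of_directed _ h_directed]
  refine (grpCoinvKer_le_iff.2 fun b _ => ?_) hw
  refine grpCoinvKer_le_iff.1 (le_iSup (fun r => grpCoinvKer σ (ballSubgroup K r)) ‖b.toAdd‖₊) ?_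
  exact mem_ballSubgroup.2 le_rfl

end AffineRepresentations

section FourierAnalysis

open Aff MeasureTheory

/-- Fubini: integrating over `A` first, the orthogonality of characters leaves only the annihilator
of `A`, on which `h` is constant. -/
lemma apply_one_eq_zero_of_forall_integral_eq_zero {A B : Type*}
    [Group A] [TopologicalSpace A] [IsTopologicalGroup A] [CompactSpace A]
    [Group B] [TopologicalSpace B] [IsTopologicalGroup B] [CompactSpace B]
    [MeasurableSpace A] [BorelSpace A] [MeasurableSpace B] [BorelSpace B]
    (μ : Measure A) [μ.IsHaarMeasure] (ν : Measure B) [ν.IsHaarMeasure]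
    {p : A →* B →* ℂˣ} (hp : IsLocallyConstant fun x : A × B => p x.1 x.2) {h : B → ℂ}
    (h_cont : Continuous h) (h_const : ∀ b, (∀ a, p a b = 1) → h b = h 1)
    (h_zero : ∀ a, ∫ b, p a b * h b ∂ν = 0) :
    h 1 = 0 := by
  let P : Set B := {b | ∀ a, p a b = 1}
  have hP : IsOpen P := isOpen_iff_eventually.2 fun b hb => by
    simpa [P] using isCompact_univ.eventually_forall_of_forall_eventually
      fun a _ => ((hp.comp_continuous continuous_swap).eventually_eq (b, a)).mono
        fun x hx => hx.trans (hb a)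
  have h_orthogonality (b : B) :
      ∫ a, p a b * h b ∂μ = P.indicator (fun _ => μ.real Set.univ * h 1) b := by
    by_cases hb : b ∈ P
    · have hb' (a : A) : p a b = 1 := hb a
      simp [hb, hb', h_const b hb]
    · rw [Set.indicator_of_notMem hb]
      obtain ⟨a₀, ha₀⟩ := not_forall.1 hb
      have h_translate := integral_mul_left_eq_self (μ := μ) (fun a => (p a b : ℂ) * h b) a₀
      simp only [map_mul, MonoidHom.mul_apply, Units.val_mul, mul_assoc] at h_translate
      rw [integral_const_mul] at h_translate
      exact (mul_left_eq_self₀.1 h_translate).resolve_left fun h1 => ha₀ (Units.ext h1)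
  have h_swap : ∫ b, ∫ a, p a b * h b ∂μ ∂ν = 0 := by
    rw [← integral_integral_swap_of_hasCompactSupport
      ((hp.comp Units.val).continuous.mul (h_cont.comp continuous_snd))
      (HasCompactSupport.of_compactSpace _)]
    simp [h_zero]
  have hμ : μ.real Set.univ ≠ 0 :=
    (measureReal_ne_zero_iff (measure_ne_top μ _)).2 (NeZero.ne _)
  have hν : ν.real P ≠ 0 := (measureReal_ne_zero_iff (measure_ne_top ν _)).2
    (hP.measure_pos ν ⟨1, fun a => map_one (p a)⟩).ne'
  simpa [h_orthogonality, integral_indicator_const _ hP.measurableSet, hμ, hν] using h_swap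

variable {K : Type*} {V : Type*} [AddCommGroup V] [Module ℂ V]

/-- The pairing `(a, b) ↦ ψ (-a * b)` of two groups of elements of `K`. -/
def negMulPairing [Field K] (ψ : AddChar K ℂ) (A B : Subgroup (Multiplicative K)) :
    A →* B →* ℂˣ where
  toFun a := ((ψ.mulShift (a : Multiplicative K).toAdd).toMonoidHom.toHomUnits.comp B.subtype)⁻¹
  map_one' := by
    ext b
    simp
  map_mul' a a' := by
    ext b
    simp [add_mul, AddChar.map_add_eq_mul]
    ring

lemma coe_negMulPairing [Field K] (ψ : AddChar K ℂ) (A B : Subgroup (Multiplicative K))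
    (a : A) (b : B) :
    (negMulPairing ψ A B a b : ℂ) =
      (ψ ((a : Multiplicative K).toAdd * (b : Multiplicative K).toAdd))⁻¹ := by
  simp [negMulPairing]

lemma exists_forall_norm_le_of_forall_addChar_mul_eq_one [NontriviallyNormedField K]
    {ψ : AddChar K ℂ} (hψ1 : ψ ≠ 1) {ε : ℝ} (hε : 0 < ε) :
    ∃ R : NNReal, ∀ b : K, (∀ a : K, ‖a‖ ≤ R → ψ (a * b) = 1) → ‖b‖ ≤ ε := by
  obtain ⟨y, hy⟩ := AddChar.ne_one_iff.1 hψ1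
  refine ⟨‖y‖₊ / ⟨ε, hε.le⟩, fun b hb => ?_⟩
  by_contra! hb_large
  have hb0 : b ≠ 0 := norm_pos_iff.1 (hε.trans hb_large)
  refine hy ?_
  rw [← div_mul_cancel₀ y hb0]
  refine hb _ ?_
  rw [norm_div]
  exact div_le_div_of_nonneg_left (norm_nonneg y) hε hb_large.le

lemma isLocallyConstant_mulShift [NontriviallyNormedField K] {ψ : AddChar K ℂ}
    (hψ : IsLocallyConstant ψ) (a : K) : IsLocallyConstant (ψ.mulShift a) :=
  hψ.comp_continuous (continuous_const_mul a)

lemma isLocallyConstant_negMulPairing [NontriviallyNormedField K] {ψ : AddChar K ℂ}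
    (hψ : IsLocallyConstant ψ) (A B : Subgroup (Multiplicative K)) :
    IsLocallyConstant fun x : A × B => negMulPairing ψ A B x.1 x.2 := by
  refine IsLocallyConstant.desc _ Units.val ?_ Units.val_injective
  have h_mul : Continuous fun x : A × B =>
      (x.1 : Multiplicative K).toAdd * (x.2 : Multiplicative K).toAdd := by fun_prop
  simpa [Function.comp_def, coe_negMulPairing] using (hψ.comp_continuous h_mul).comp Inv.inv

variable [NontriviallyNormedField K] [IsUltrametricDist K] [ProperSpace K] {ρ : Rep K V}
  {ψ : AddChar K ℂ}

/-- Near each `a` a radius that works for `a` still works, so compactness makes it uniform. -/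
lemma exists_forall_mem_grpCoinvKer_ballSubgroup (hψ : IsLocallyConstant ψ) {w : V}
    (hw : ∀ a, w ∈ sTwistKer ρ (ψ.mulShift a)) (R : ℝ) :
    ∃ r, ∀ a, ‖a‖ ≤ R → w ∈ grpCoinvKer (sTwistRep ρ (ψ.mulShift a)) (ballSubgroup K r) := by
  suffices ∃ r, ∀ a ∈ Metric.closedBall (0 : K) R,
      w ∈ grpCoinvKer (sTwistRep ρ (ψ.mulShift a)) (ballSubgroup K r) by
    simpa only [mem_closedBall_zero_iff] using this
  refine (isCompact_closedBall (0 : K) R).induction_on ⟨0, by simp⟩ ?_ ?_ ?_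
  · rintro s t hst ⟨r, hr⟩
    exact ⟨r, fun a ha => hr a (hst ha)⟩
  · rintro s t ⟨r, hr⟩ ⟨r', hr'⟩
    refine ⟨max r r', fun a ha => ha.elim (fun h => ?_) fun h => ?_⟩
    · exact grpCoinvKer_mono _ (ballSubgroup_mono (le_max_left r r')) (hr a h)
    · exact grpCoinvKer_mono _ (ballSubgroup_mono (le_max_right r r')) (hr' a h)
  · intro a _
    obtain ⟨r, hr⟩ := exists_mem_grpCoinvKer_ballSubgroup (sTwistKer_eq_grpCoinvKer ρ _ ▸ hw a)
    obtain ⟨ε, hε, hψε⟩ := exists_pos_forall_norm_le_addChar_eq_one hψ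
    have h_pos : 0 < ε / (r + 1) := by positivity
    refine ⟨_, mem_nhdsWithin_of_mem_nhds (Metric.closedBall_mem_nhds a h_pos), r, fun c hc => ?_⟩
    rwa [grpCoinvKer_sTwistRep_congr fun b hb => ?_]
    have h_small : ‖(c - a) * b‖ ≤ ε := by
      rw [norm_mul]
      calc ‖c - a‖ * ‖b‖ ≤ ε / (r + 1) * (r + 1) := by
            gcongr
            · exact mem_closedBall_iff_norm.1 hc
            · exact (mem_ballSubgroup.1 hb).trans (le_add_of_nonneg_right zero_le_one)
        _ = ε := div_mul_cancel₀ ε (by positivity)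
    have h_split : c * b = (c - a) * b + a * b := by ring
    rw [AddChar.mulShift_apply, AddChar.mulShift_apply, h_split, AddChar.map_add_eq_mul,
      hψε _ h_small, one_mul]

theorem eq_zero_of_forall_mem_sTwistKer (hρ : IsSmoothRep ρ) (hψ : IsLocallyConstant ψ)
    (hψ1 : ψ ≠ 1) {w : V} (hw : ∀ a, w ∈ sTwistKer ρ (ψ.mulShift a)) : w = 0 := by
  refine (Module.forall_dual_apply_eq_zero_iff ℂ w).1 fun ℓ => ?_
  obtain ⟨ε, hε, h_fix⟩ := exists_pos_forall_norm_le_apply_sS_eq hρ w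
  obtain ⟨R, hR⟩ := exists_forall_norm_le_of_forall_addChar_mul_eq_one hψ1 hε
  obtain ⟨r, hr⟩ := exists_forall_mem_grpCoinvKer_ballSubgroup hψ hw R
  let A := ballSubgroup K R
  let B := ballSubgroup K r
  have : CompactSpace A := isCompact_iff_compactSpace.1 (isCompact_ballSubgroup R)
  have : CompactSpace B := isCompact_iff_compactSpace.1 (isCompact_ballSubgroup r)
  borelize ↥A ↥B
  have h_annihilator (b : B) (hb : ∀ a, negMulPairing ψ A B a b = 1) :
      ‖(b : Multiplicative K).toAdd‖ ≤ ε := by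
    refine hR _ fun a ha => ?_
    have hab := congrArg Units.val (hb ⟨.ofAdd a, mem_ballSubgroup.2 ha⟩)
    rw [coe_negMulPairing] at hab
    simpa using hab
  have h_cont : Continuous fun b : B => ℓ (ρ.comp sSHom (b : Multiplicative K) w) :=
    (((isSmooth_comp_sSHom hρ).isLocallyConstant w).comp ℓ).continuous.comp continuous_subtype_val
  have h := apply_one_eq_zero_of_forall_integral_eq_zero (Measure.haar : Measure A)
    (Measure.haar : Measure B) (isLocallyConstant_negMulPairing hψ A B) h_cont
    (fun b hb => ?_) fun a => ?_
  · simpa using h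
  · have h_fix_b : ρ.comp sSHom (b : Multiplicative K) w = w := h_fix _ (h_annihilator b hb)
    simp only [h_fix_b, OneMemClass.coe_one, map_one, Module.End.one_apply]
  · have hwa := hr (a : Multiplicative K).toAdd (mem_ballSubgroup.1 a.2)
    rw [← grpCoinvKer_comp_subtype] at hwa
    have h_int := integral_eq_zero_of_mem_grpCoinvKer (Measure.haar : Measure B) (ℓ := ℓ)
      (fun v => ?_) hwa
    · convert h_int using 3 with b
      simp [sTwistRep, twist_apply, coe_negMulPairing]
    · have h_smooth := isSmooth_sTwistRep hρ
        (isLocallyConstant_mulShift hψ (a : Multiplicative K).toAdd)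
      exact (((h_smooth.isLocallyConstant v).comp ℓ).continuous.comp
        continuous_subtype_val).integrable_of_hasCompactSupport
          (HasCompactSupport.of_compactSpace _)

lemma sInv_eq_top_of_sTwistKer_eq_top (hρ : IsSmoothRep ρ) (hψ : IsLocallyConstant ψ)
    (hψ1 : ψ ≠ 1) (h_top : sTwistKer ρ ψ = ⊤) : sInv ρ = ⊤ := by
  refine eq_top_iff.2 fun v _ b => ?_
  rw [← sub_eq_zero]
  refine eq_zero_of_forall_mem_sTwistKer hρ hψ hψ1 fun a => ?_
  obtain rfl | ha := eq_or_ne a 0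
  · rw [AddChar.mulShift_zero, sTwistKer_one]
    exact Submodule.subset_span ⟨b, v, rfl⟩
  · rw [← Units.val_mk0 ha, sTwistKer_mulShift_eq_top h_top]
    trivial

end FourierAnalysis

section SchwartzModule

open Aff

variable {K : Type*} [NontriviallyNormedField K] {ψ : AddChar K ℂ}

lemma SRep_apply (hψ : IsLocallyConstant ψ) (g : Aff K) (f : SSx K) (x : Kˣ) :
    (SRep ψ hψ g f).1 x = ψ (g.s * x) * f.1 (x * g.t) := rfl

lemma eventually_forall_mem_tsupport_SRep_apply_eq (hψ : IsLocallyConstant ψ) (f : SSx K) :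
    ∀ᶠ g in nhds (1 : Aff K), ∀ x ∈ tsupport f.1, (SRep ψ hψ g f).1 x = f.1 x := by
  have h_t := continuous_t (K := K)
  have h_s := continuous_s (K := K)
  have h_char : IsLocallyConstant fun z : Aff K × Kˣ => ψ (z.1.s * z.2) :=
    hψ.comp_continuous (by fun_prop)
  have h_translate : IsLocallyConstant fun z : Aff K × Kˣ => f.1 (z.2 * z.1.t) :=
    f.2.1.comp_continuous (by fun_prop)
  have h_snd : IsLocallyConstant fun z : Aff K × Kˣ => f.1 z.2 :=
    f.2.1.comp_continuous continuous_snd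
  refine f.2.2.isCompact.eventually_forall_of_forall_eventually fun x _ => ?_
  filter_upwards [h_char.eventually_eq (1, x), h_translate.eventually_eq (1, x),
    h_snd.eventually_eq (1, x)] with z h₁ h₂ h₃
  simp [SRep_apply, h₁, h₂, h₃]

theorem isSmoothRep_SRep (hψ : IsLocallyConstant ψ) : IsSmoothRep (SRep ψ hψ) := by
  intro f
  refine Subgroup.isOpen_of_mem_nhds (vectorStabilizer (SRep ψ hψ) f) (g := 1) ?_
  have h_fix := eventually_forall_mem_tsupport_SRep_apply_eq hψ f
  have h_inv := (continuous_inv.tendsto' (1 : Aff K) 1 inv_one).eventually h_fix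
  filter_upwards [h_fix, h_inv] with g hg hg_inv
  refine Subtype.ext (funext fun x => ?_)
  by_cases hx : x ∈ tsupport f.1
  · exact hg x hx
  · have hfx : f.1 x = 0 := image_eq_zero_of_notMem_tsupport hx
    suffices f.1 (x * g.t) = 0 by rw [SRep_apply, this, mul_zero, hfx]
    by_contra h_ne
    have h := hg_inv _ (subset_tsupport _ h_ne)
    rw [SRep_apply, inv_t, mul_inv_cancel_right, hfx, mul_zero] at h
    exact h_ne h.symm

lemma exists_pos_forall_norm_le_eq_zero (f : SSx K) :
    ∃ δ > 0, ∀ x : Kˣ, ‖(x : K)‖ ≤ δ → f.1 x = 0 := by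
  have h_compact : IsCompact ((↑) '' tsupport f.1 : Set K) :=
    f.2.2.isCompact.image Units.continuous_val
  obtain ⟨δ, hδ, h⟩ := exists_pos_forall_norm_le_of_isOpen h_compact.isClosed.isOpen_compl
    (by simp)
  refine ⟨δ, hδ, fun x hx => image_eq_zero_of_notMem_tsupport fun h_mem => h x hx ⟨x, h_mem, rfl⟩⟩

lemma sInv_SRep (hψ : IsLocallyConstant ψ) (hψ1 : ψ ≠ 1) : sInv (SRep ψ hψ) = ⊥ := by
  obtain ⟨y, hy⟩ := AddChar.ne_one_iff.1 hψ1
  refine (Submodule.eq_bot_iff _).2 fun f hf => Subtype.ext (funext fun x => ?_)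
  have h := congrFun (congrArg Subtype.val (hf (y / x))) x
  rw [SRep_apply, sS_s, div_mul_cancel₀ y x.ne_zero, sS_t, mul_one] at h
  exact (mul_left_eq_self₀.1 h).resolve_left hy

lemma apply_eq_zero_of_mem_grpCoinvKer_sTwistRep (hψ : IsLocallyConstant ψ) {a : K}
    {N : Subgroup (Multiplicative K)} {x : Kˣ} (hx : ∀ b, .ofAdd b ∈ N → ψ (b * (x - a)) = 1)
    {f : SSx K} (hf : f ∈ grpCoinvKer (sTwistRep (SRep ψ hψ) (ψ.mulShift a)) N) : f.1 x = 0 := by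
  let evalAt : SSx K →ₗ[ℂ] ℂ := LinearMap.proj x ∘ₗ (SSx K).subtype
  suffices grpCoinvKer (sTwistRep (SRep ψ hψ) (ψ.mulShift a)) N ≤ LinearMap.ker evalAt from this hf
  rw [grpCoinvKer_sTwistRep]
  refine Submodule.span_le.2 ?_
  rintro _ ⟨b, hb, f, rfl⟩
  have h_char : ψ (b * x) = ψ (a * b) := by
    have h_split : b * x = b * (x - a) + a * b := by ring
    rw [h_split, AddChar.map_add_eq_mul, hx b hb, one_mul]
  change (SRep ψ hψ (sS b) f).1 x - ψ (a * b) * f.1 x = 0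
  rw [SRep_apply, sS_s, sS_t, mul_one, h_char, sub_self]

/-- The average of `f` against `ψ_a⁻¹` over a large ball of `S` is the restriction of `f` to a small
neighbourhood of `a`. -/
lemma mem_sTwistKer_SRep_of_forall_eq_zero [IsUltrametricDist K] [ProperSpace K]
    (hψ : IsLocallyConstant ψ) (hψ1 : ψ ≠ 1) {f : SSx K} {a : K} {δ : ℝ} (hδ : 0 < δ)
    (hf : ∀ x : Kˣ, ‖x - a‖ ≤ δ → f.1 x = 0) :
    f ∈ sTwistKer (SRep ψ hψ) (ψ.mulShift a) := by
  obtain ⟨r, hr⟩ := exists_forall_norm_le_of_forall_addChar_mul_eq_one hψ1 hδ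
  obtain ⟨g, hg, hfg⟩ := exists_mem_grpInv_sub_mem_grpCoinvKer
    (isSmooth_sTwistRep (isSmoothRep_SRep hψ) (isLocallyConstant_mulShift hψ a))
    (isCompact_ballSubgroup r) f
  suffices g = 0 by
    rw [this, sub_zero] at hfg
    exact sTwistKer_eq_grpCoinvKer (SRep ψ hψ) _ ▸ grpCoinvKer_mono _ le_top hfg
  refine Subtype.ext (funext fun x => ?_)
  by_cases hx : ∀ b : K, ‖b‖ ≤ r → ψ (b * (x - a)) = 1
  · have h_eq : f.1 x - g.1 x = 0 :=
      apply_eq_zero_of_mem_grpCoinvKer_sTwistRep hψ (fun b hb => hx b hb) hfg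
    rw [hf x (hr _ hx), zero_sub, neg_eq_zero] at h_eq
    exact h_eq
  · push Not at hx
    obtain ⟨b, hb, hb1⟩ := hx
    have h := congrFun (congrArg Subtype.val (mem_grpInv_sTwistRep.1 hg b hb)) x
    have h' : ψ (b * x) * g.1 x = ψ (a * b) * g.1 x := by
      simpa [SRep_apply] using h
    have h_split : b * x = b * (x - a) + a * b := by ring
    rw [h_split, AddChar.map_add_eq_mul, mul_assoc] at h'
    have h_zero := (mul_left_eq_self₀.1 h').resolve_left hb1
    exact (mul_eq_zero.1 h_zero).resolve_left (AddChar.val_isUnit ψ _).ne_zero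

lemma sCoinvKer_SRep [IsUltrametricDist K] [ProperSpace K] (hψ : IsLocallyConstant ψ)
    (hψ1 : ψ ≠ 1) : sCoinvKer (SRep ψ hψ) = ⊤ := by
  refine eq_top_iff.2 fun f _ => ?_
  obtain ⟨δ, hδ, hf⟩ := exists_pos_forall_norm_le_eq_zero f
  rw [← sTwistKer_one, ← AddChar.mulShift_zero ψ]
  exact mem_sTwistKer_SRep_of_forall_eq_zero hψ hψ1 hδ fun x hx => hf x (by simpa using hx)

end SchwartzModule

section SubquotientRepresentations

lemma iso_of_equivariant_of_ne_zero {G : Type*} [Monoid G] {V W : Type*} [AddCommGroup V]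
    [Module ℂ V] [AddCommGroup W] [Module ℂ W] {ρ : Representation ℂ G V}
    {σ : Representation ℂ G W} (hρ : GRep.Irred ρ) (hσ : GRep.Irred σ) {f : V →ₗ[ℂ] W}
    (hf : GRep.Equivariant ρ σ f) (hf0 : f ≠ 0) : GRep.Iso ρ σ := by
  have h_ker : LinearMap.ker f = ⊥ := (hρ.2 _ (GRep.ker_invariant ρ σ f hf)).resolve_right
    fun h => hf0 (LinearMap.ker_eq_top.1 h)
  have h_range : LinearMap.range f = ⊤ := (hσ.2 _ (GRep.range_invariant ρ σ f hf)).resolve_left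
    fun h => hf0 (LinearMap.range_eq_bot.1 h)
  exact ⟨.ofBijective f ⟨LinearMap.ker_eq_bot.1 h_ker, LinearMap.range_eq_top.1 h_range⟩, hf⟩

variable {K : Type*} [NontriviallyNormedField K] {V : Type*} [AddCommGroup V] [Module ℂ V]
  {ρ : Rep K V}

lemma isSmoothRep_sub (hρ : IsSmoothRep ρ) {U : Submodule ℂ V} (hU : GRep.Invariant ρ U) :
    IsSmoothRep (GRep.sub ρ hU) :=
  IsSmooth.of_stabilizer_le hρ fun w => ⟨w, fun _ hg => Subtype.ext hg⟩

lemma isSmoothRep_quot (hρ : IsSmoothRep ρ) {U : Submodule ℂ V} (hU : GRep.Invariant ρ U) :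
    IsSmoothRep (GRep.quot ρ U hU) := by
  refine IsSmooth.of_stabilizer_le hρ fun w => ?_
  obtain ⟨v, rfl⟩ := Submodule.Quotient.mk_surjective U w
  exact ⟨v, fun g hg => by rw [GRep.quot_apply, hg]⟩

end SubquotientRepresentations

section SchwartzModuleIrreducible

open Aff

variable {K : Type*} [NontriviallyNormedField K] {ψ : AddChar K ℂ}

lemma exists_mem_apply_one_ne_zero (hψ : IsLocallyConstant ψ) {U : Submodule ℂ (SSx K)}
    (hU : GRep.Invariant (SRep ψ hψ) U) (hU0 : U ≠ ⊥) : ∃ f ∈ U, f.1 1 ≠ 0 := by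
  obtain ⟨f, hf, hf0⟩ := U.ne_bot_iff.1 hU0
  obtain ⟨x, hx⟩ : ∃ x, f.1 x ≠ 0 := by
    by_contra! h
    exact hf0 (Subtype.ext (funext h))
  refine ⟨SRep ψ hψ (xT x) f, hU _ _ hf, ?_⟩
  simpa [SRep_apply] using hx

variable [IsUltrametricDist K] [ProperSpace K]

/-- The function in `𝕊` that equals `χ` on the units of norm `1` and vanishes elsewhere. -/
def indicatorNormOneUnits {χ : Kˣ →* ℂˣ} (hχ : SmoothMulChar χ) : SSx K :=
  ⟨(normOneUnits K : Set Kˣ).indicator fun u => (χ u : ℂ),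
    (LocallyConstant.indicator ⟨_, hχ.isLocallyConstant.comp Units.val⟩
      isClopen_normOneUnits).isLocallyConstant,
    .intro (isCompact_normOneUnits K) fun _ hu => Set.indicator_of_notMem hu _⟩

lemma mem_sTwistKer_SRep_of_apply_one_eq_zero (hψ : IsLocallyConstant ψ) (hψ1 : ψ ≠ 1)
    {f : SSx K} (hf : f.1 1 = 0) : f ∈ sTwistKer (SRep ψ hψ) ψ := by
  have h_nhds : ∀ᶠ x : K in nhds (1 : Kˣ), ∀ u : Kˣ, (u : K) = x → f.1 u = 0 := by
    rw [← Units.isOpenEmbedding_val.map_nhds_eq, Filter.eventually_map]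
    filter_upwards [f.2.1.eventually_eq 1] with v hv u huv
    rw [Units.ext huv, hv, hf]
  obtain ⟨δ, hδ, h⟩ := Metric.nhds_basis_closedBall.eventually_iff.1 h_nhds
  simpa only [AddChar.mulShift_one] using mem_sTwistKer_SRep_of_forall_eq_zero hψ hψ1 hδ
    (a := 1) fun x hx => h (mem_closedBall_iff_norm.2 hx) x rfl

theorem irred_SRep (hψ : IsLocallyConstant ψ) (hψ1 : ψ ≠ 1) : GRep.Irred (SRep ψ hψ) := by
  refine ⟨⟨indicatorNormOneUnits (χ := 1) (by simp [SmoothMulChar]), 0, fun h => ?_⟩,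
    fun U hU => or_iff_not_imp_left.2 fun hU0 => ?_⟩
  · simpa [indicatorNormOneUnits] using congrFun (congrArg Subtype.val h) 1
  have h_equiv := GRep.mkQ_equivariant (SRep ψ hψ) U hU
  have h_twist : sTwistKer (GRep.quot (SRep ψ hψ) U hU) ψ = ⊤ := by
    refine eq_top_iff.2 fun w _ => ?_
    obtain ⟨f, rfl⟩ := U.mkQ_surjective w
    obtain ⟨f₀, hf₀, h_ne⟩ := exists_mem_apply_one_ne_zero hψ hU hU0
    have h_eq : U.mkQ f = U.mkQ (f - (f.1 1 / f₀.1 1) • f₀) := by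
      simp [(Submodule.Quotient.mk_eq_zero U).2 hf₀]
    rw [h_eq]
    refine sTwistKer_le_comap h_equiv ψ (mem_sTwistKer_SRep_of_apply_one_eq_zero hψ hψ1 ?_)
    simp [h_ne]
  have h_bot : sCoinvKer (GRep.quot (SRep ψ hψ) U hU) = ⊥ := sCoinvKer_eq_bot_iff.2 <|
    sInv_eq_top_of_sTwistKer_eq_top (isSmoothRep_quot (isSmoothRep_SRep hψ) hU) hψ hψ1 h_twist
  refine eq_top_iff.2 fun f _ => ?_
  have hf : f ∈ sCoinvKer (SRep ψ hψ) := sCoinvKer_SRep hψ hψ1 ▸ Submodule.mem_top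
  have h_mem := sCoinvKer_le_comap _ _ _ h_equiv hf
  rw [h_bot] at h_mem
  simpa using h_mem

end SchwartzModuleIrreducible

section KirillovModel

open Aff

variable {K : Type*} [NontriviallyNormedField K] {V : Type*} [AddCommGroup V] [Module ℂ V]
  {ρ : Rep K V} {ψ : AddChar K ℂ} {ℓ : V →ₗ[ℂ] ℂ}

lemma apply_sS_of_sTwistKer_le_ker (hℓ : sTwistKer ρ ψ ≤ LinearMap.ker ℓ) (b : K) (v : V) :
    ℓ (ρ (sS b) v) = ψ b * ℓ v := by
  have h : ℓ (ρ (sS b) v - ψ b • v) = 0 := hℓ (Submodule.subset_span ⟨b, v, rfl⟩)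
  simpa [sub_eq_zero] using h

lemma apply_xT_apply_of_sTwistKer_le_ker (hℓ : sTwistKer ρ ψ ≤ LinearMap.ker ℓ) (x : Kˣ)
    (g : Aff K) (v : V) :
    ℓ (ρ (xT x) (ρ g v)) = ψ (g.s * x) * ℓ (ρ (xT (x * g.t)) v) := by
  rw [apply_eq_apply_sS_apply_xT ρ g, apply_xT_apply_sS, apply_sS_of_sTwistKer_le_ker hℓ, mul_comm,
    ← Module.End.mul_apply, ← map_mul, ← xTHom_apply x, ← xTHom_apply g.t, ← map_mul, xTHom_apply]
  ring_nf

lemma exists_pos_forall_norm_le_apply_xT_eq_zero (hψ : IsLocallyConstant ψ)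
    (hℓ : sTwistKer ρ ψ ≤ LinearMap.ker ℓ) {v : V} (hv : v ∈ sCoinvKer ρ) :
    ∃ δ > 0, ∀ x : Kˣ, ‖(x : K)‖ ≤ δ → ℓ (ρ (xT x) v) = 0 := by
  induction hv using Submodule.span_induction with
  | mem _ hv =>
    obtain ⟨b, v, rfl⟩ := hv
    obtain ⟨ε, hε, hψε⟩ := exists_pos_forall_norm_le_addChar_eq_one hψ
    refine ⟨ε / (‖b‖ + 1), by positivity, fun x hx => ?_⟩
    have h_small : ‖b * x‖ ≤ ε := by
      rw [norm_mul]
      calc ‖b‖ * ‖(x : K)‖ ≤ (‖b‖ + 1) * (ε / (‖b‖ + 1)) := by gcongr; simp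
        _ = ε := mul_div_cancel₀ ε (by positivity)
    simp [apply_xT_apply_of_sTwistKer_le_ker hℓ, hψε _ h_small]
  | zero => exact ⟨1, one_pos, by simp⟩
  | add v w _ _ hv hw =>
    obtain ⟨δ, hδ, hv⟩ := hv
    obtain ⟨δ', hδ', hw⟩ := hw
    refine ⟨min δ δ', lt_min hδ hδ', fun x hx => ?_⟩
    rw [map_add, map_add, hv x (hx.trans (min_le_left _ _)), hw x (hx.trans (min_le_right _ _)),
      add_zero]
  | smul c v _ hv =>
    obtain ⟨δ, hδ, hv⟩ := hv
    exact ⟨δ, hδ, fun x hx => by rw [map_smul, map_smul, hv x hx, smul_zero]⟩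

lemma exists_forall_lt_norm_apply_xT_eq_zero (hρ : IsSmoothRep ρ) (hψ1 : ψ ≠ 1)
    (hℓ : sTwistKer ρ ψ ≤ LinearMap.ker ℓ) (v : V) :
    ∃ R, ∀ x : Kˣ, R < ‖(x : K)‖ → ℓ (ρ (xT x) v) = 0 := by
  obtain ⟨y, hy⟩ := AddChar.ne_one_iff.1 hψ1
  obtain ⟨ε, hε, h_fix⟩ := exists_pos_forall_norm_le_apply_sS_eq hρ v
  refine ⟨‖y‖ / ε, fun x hx => ?_⟩
  have h_small : ‖y / x‖ ≤ ε := by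
    rw [norm_div]
    exact div_le_of_le_mul₀ (norm_nonneg _) hε.le ((div_lt_iff₀' hε).1 hx).le
  have h := apply_xT_apply_of_sTwistKer_le_ker hℓ x (sS (y / x)) v
  rw [h_fix _ h_small, sS_s, sS_t, mul_one, div_mul_cancel₀ y x.ne_zero] at h
  exact (mul_left_eq_self₀.1 h.symm).resolve_left hy

/-- The Kirillov model: the map `V → 𝕊`, `v ↦ (x ↦ ℓ (x_x v))`, attached to a functional `ℓ` on the
twisted coinvariants `V_{S,ψ}`. -/
def kirillovMap [ProperSpace K] (hρ : IsSmoothRep ρ) (hψ : IsLocallyConstant ψ) (hψ1 : ψ ≠ 1)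
    (hℓ : sTwistKer ρ ψ ≤ LinearMap.ker ℓ) (h_coinv : sCoinvKer ρ = ⊤) : V →ₗ[ℂ] SSx K :=
  LinearMap.codRestrict (SSx K) (LinearMap.pi fun x => ℓ ∘ₗ ρ (xT x)) fun v => by
    constructor
    · exact ((isSmooth_comp_xTHom hρ).isLocallyConstant v).comp ℓ
    · obtain ⟨δ, hδ, h_near⟩ := exists_pos_forall_norm_le_apply_xT_eq_zero hψ hℓ
        (h_coinv ▸ Submodule.mem_top : v ∈ sCoinvKer ρ)
      obtain ⟨R, h_far⟩ := exists_forall_lt_norm_apply_xT_eq_zero hρ hψ1 hℓ v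
      refine .intro (isCompact_setOf_norm_mem_Icc hδ R) fun x hx => ?_
      rw [Set.mem_ofPred_eq, Set.mem_Icc, not_and_or, not_le, not_le] at hx
      exact hx.elim (fun h => h_near x h.le) (h_far x)

lemma kirillovMap_apply [ProperSpace K] (hρ : IsSmoothRep ρ) (hψ : IsLocallyConstant ψ)
    (hψ1 : ψ ≠ 1) (hℓ : sTwistKer ρ ψ ≤ LinearMap.ker ℓ) (h_coinv : sCoinvKer ρ = ⊤) (v : V)
    (x : Kˣ) : (kirillovMap hρ hψ hψ1 hℓ h_coinv v).1 x = ℓ (ρ (xT x) v) := rfl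

variable [IsUltrametricDist K] [ProperSpace K]

theorem iso_SRep_of_irred (hρ : IsSmoothRep ρ) (hψ : IsLocallyConstant ψ) (hψ1 : ψ ≠ 1)
    (h_irred : GRep.Irred ρ) (h_inv : sInv ρ ≠ ⊤) : GRep.Iso ρ (SRep ψ hψ) := by
  have h_coinv : sCoinvKer ρ = ⊤ := (h_irred.2 _ (sCoinvKer_invariant ρ)).resolve_left
    fun h => h_inv (sCoinvKer_eq_bot_iff.1 h)
  have h_twist : sTwistKer ρ ψ ≠ ⊤ := fun h =>
    h_inv (sInv_eq_top_of_sTwistKer_eq_top hρ hψ hψ1 h)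
  obtain ⟨ℓ, hℓ0, hℓ⟩ := Submodule.exists_le_ker_of_lt_top _ h_twist.lt_top
  refine iso_of_equivariant_of_ne_zero h_irred (irred_SRep hψ hψ1)
    (f := kirillovMap hρ hψ hψ1 hℓ h_coinv) (fun g v => ?_) fun h => hℓ0 ?_
  · exact Subtype.ext (funext fun x => apply_xT_apply_of_sTwistKer_le_ker hℓ x g v)
  · ext v
    have h_one := congrFun (congrArg Subtype.val (LinearMap.congr_fun h v)) 1
    rw [kirillovMap_apply, ← xTHom_apply, map_one, map_one] at h_one
    exact h_one

end KirillovModel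

section EigenvectorsAndInvariants

open Aff

variable {K : Type*} [NontriviallyNormedField K] {V : Type*} [AddCommGroup V] [Module ℂ V]
  {ρ : Rep K V}

/-- An eigenvector of `T` is fixed by a ball of `S`, and conjugation by `T` expands this ball to all
of `S`. -/
theorem tEigen_le_sInv (hρ : IsSmoothRep ρ) (χ : Kˣ →* ℂˣ) : tEigen ρ χ ≤ sInv ρ := by
  intro v hv b
  obtain ⟨ε, hε, h_fix⟩ := exists_pos_forall_norm_le_apply_sS_eq hρ v
  obtain ⟨z, hz0, hz⟩ := NormedField.exists_norm_lt K (r := ε / (‖b‖ + 1)) (by positivity)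
  let u := Units.mk0 z (norm_pos_iff.1 hz0)
  have h_small : ‖u * b‖ ≤ ε := by
    rw [norm_mul]
    calc ‖z‖ * ‖b‖ ≤ ε / (‖b‖ + 1) * (‖b‖ + 1) := by gcongr; linarith
      _ = ε := by field_simp
  refine (Representation.apply_bijective ρ (xT u)).injective ?_
  have hu : ρ (xT u) v = (χ u : ℂ) • v := hv u
  rw [apply_xT_apply_sS, hu, map_smul, h_fix _ h_small]

end EigenvectorsAndInvariants

section SchwartzModuleExcess

open Aff MeasureTheory

variable {K : Type*} [NontriviallyNormedField K] [IsUltrametricDist K]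

lemma finite_image_mk_tsupport (f : SSx K) :
    (QuotientGroup.mk (s := normOneUnits K) '' tsupport f.1).Finite := by
  have := QuotientGroup.discreteTopology (isClopen_normOneUnits (K := K)).isOpen
  exact (f.2.2.isCompact.image QuotientGroup.continuous_mk).finite_of_discrete

variable [ProperSpace K] {ψ : AddChar K ℂ} {χ : Kˣ →* ℂˣ}

lemma indicatorNormOneUnits_notMem_tTwistKer (hψ : IsLocallyConstant ψ) (hχ : SmoothMulChar χ) :
    indicatorNormOneUnits hχ ∉ tTwistKer (SRep ψ hψ) χ := by
  borelize Kˣ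
  have : LocallyCompactSpace Kˣ := Units.isOpenEmbedding_val.locallyCompactSpace
  let evalOne : SSx K →ₗ[ℂ] ℂ := LinearMap.proj 1 ∘ₗ (SSx K).subtype
  have h_orbit (f : SSx K) (u : Kˣ) :
      evalOne (twist ((SRep ψ hψ).comp xTHom) χ u f) = (χ u : ℂ)⁻¹ * f.1 u := by
    change (χ u : ℂ)⁻¹ * (SRep ψ hψ (xT u) f).1 1 = _
    simp [SRep_apply]
  have h_χ : Continuous fun u => (χ u : ℂ)⁻¹ :=
    (hχ.isLocallyConstant.comp fun c : ℂˣ => (c : ℂ)⁻¹).continuous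
  rw [tTwistKer_eq_grpCoinvKer]
  intro h_mem
  have h_int := integral_eq_zero_of_mem_grpCoinvKer Measure.haar (ℓ := evalOne) (fun f => by
    simp only [h_orbit]
    exact (h_χ.mul f.2.1.continuous).integrable_of_hasCompactSupport f.2.2.mul_left) h_mem
  have h_indicator (u : Kˣ) : (χ u : ℂ)⁻¹ * (indicatorNormOneUnits hχ).1 u =
      (normOneUnits K : Set Kˣ).indicator (fun _ => 1) u := by
    by_cases hu : u ∈ (normOneUnits K : Set Kˣ) <;> simp [indicatorNormOneUnits, hu]
  simp only [h_orbit, h_indicator] at h_int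
  have h_open := (isClopen_normOneUnits (K := K)).isOpen
  rw [integral_indicator_const _ h_open.measurableSet, smul_eq_zero_iff_left one_ne_zero,
    measureReal_eq_zero_iff (isCompact_normOneUnits K).measure_lt_top.ne] at h_int
  exact h_open.measure_ne_zero _ ⟨1, one_mem _⟩ h_int

lemma SRep_xT_inv_indicatorNormOneUnits_apply (hψ : IsLocallyConstant ψ) (hχ : SmoothMulChar χ)
    (u x : Kˣ) : (SRep ψ hψ (xT u⁻¹) (indicatorNormOneUnits hχ)).1 x =
      if (u : Kˣ ⧸ normOneUnits K) = x then (χ (u⁻¹ * x) : ℂ) else 0 := by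
  simp [SRep_apply, indicatorNormOneUnits, Set.indicator_apply, QuotientGroup.eq, mul_comm x]

lemma eq_sum_smul_SRep_xT_indicatorNormOneUnits (hψ : IsLocallyConstant ψ)
    (hχ : SmoothMulChar χ) {f : SSx K}
    (hf : f ∈ grpInv (twist ((SRep ψ hψ).comp xTHom) χ) (normOneUnits K)) :
    f = ∑ c ∈ (finite_image_mk_tsupport f).toFinset,
      f.1 c.out • SRep ψ hψ (xT c.out⁻¹) (indicatorNormOneUnits hχ) := by
  have h_eigen (x u : Kˣ) (hu : u ∈ normOneUnits K) : f.1 (x * u) = χ u * f.1 x := by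
    have h := congrFun (congrArg Subtype.val (mem_grpInv_twist.1 hf u hu)) x
    simpa [SRep_apply] using h
  refine Subtype.ext (funext fun x => ?_)
  rw [AddSubmonoidClass.coe_finsetSum, Finset.sum_apply]
  simp only [SetLike.val_smul, Pi.smul_apply, SRep_xT_inv_indicatorNormOneUnits_apply,
    QuotientGroup.out_eq', smul_eq_mul, mul_ite, mul_zero]
  rw [Finset.sum_ite_eq']
  split_ifs with hx
  · rw [mul_comm, ← h_eigen _ _ (QuotientGroup.eq.1 (QuotientGroup.out_eq' _)),
      mul_inv_cancel_left]
  · by_contra h_ne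
    exact hx ((Set.Finite.mem_toFinset _).2 ⟨x, subset_tsupport _ h_ne, rfl⟩)

lemma span_indicatorNormOneUnits_sup_tTwistKer (hψ : IsLocallyConstant ψ)
    (hχ : SmoothMulChar χ) :
    Submodule.span ℂ {indicatorNormOneUnits hχ} ⊔ tTwistKer (SRep ψ hψ) χ = ⊤ := by
  refine eq_top_iff.2 fun f _ => ?_
  have h_smooth := isSmooth_twist_comp_xTHom (isSmoothRep_SRep hψ) hχ
  obtain ⟨a, ha, hfa⟩ := exists_mem_grpInv_sub_mem_grpCoinvKer h_smooth (isCompact_normOneUnits K) f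
  have hfa' : f - a ∈ tTwistKer (SRep ψ hψ) χ := by
    rw [tTwistKer_eq_grpCoinvKer]
    exact grpCoinvKer_mono _ le_top hfa
  have h_span := Submodule.mem_span_singleton_self (R := ℂ) (indicatorNormOneUnits hχ)
  suffices a ∈ Submodule.span ℂ {indicatorNormOneUnits hχ} ⊔ tTwistKer (SRep ψ hψ) χ by
    simpa using add_mem (Submodule.mem_sup_right hfa') this
  rw [eq_sum_smul_SRep_xT_indicatorNormOneUnits hψ hχ ha]
  refine sum_mem fun c _ => Submodule.smul_mem _ _ ?_
  rw [← sub_add_cancel (SRep ψ hψ _ _) ((χ c.out⁻¹ : ℂ) • indicatorNormOneUnits hχ)]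
  exact add_mem (Submodule.mem_sup_right (Submodule.subset_span ⟨_, _, rfl⟩))
    (Submodule.mem_sup_left (Submodule.smul_mem _ _ h_span))

theorem hasCoinvariantExcess_SRep (hψ : IsLocallyConstant ψ) (hψ1 : ψ ≠ 1)
    (hχ : SmoothMulChar χ) :
    HasCoinvariantExcess (twist ((SRep ψ hψ).comp xTHom) χ) 1 := by
  rw [HasCoinvariantExcess, ← tEigen_eq_grpInv, ← tTwistKer_eq_grpCoinvKer]
  have h_eigen : tEigen (SRep ψ hψ) χ = ⊥ := by
    rw [eq_bot_iff, ← sInv_SRep hψ hψ1]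
    exact tEigen_le_sInv (isSmoothRep_SRep hψ) χ
  have h_coinv : Module.finrank ℂ (SSx K ⧸ tTwistKer (SRep ψ hψ) χ) = 1 := by
    refine finrank_eq_one (Submodule.Quotient.mk (indicatorNormOneUnits hχ)) ?_ fun w => ?_
    · rw [Ne, Submodule.Quotient.mk_eq_zero]
      exact indicatorNormOneUnits_notMem_tTwistKer hψ hχ
    · obtain ⟨f, rfl⟩ := Submodule.Quotient.mk_surjective _ w
      have hf : f ∈ Submodule.span ℂ {indicatorNormOneUnits hχ} ⊔ tTwistKer (SRep ψ hψ) χ :=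
        span_indicatorNormOneUnits_sup_tTwistKer hψ hχ ▸ Submodule.mem_top
      obtain ⟨_, hg, w, hw, rfl⟩ := Submodule.mem_sup.1 hf
      obtain ⟨c, rfl⟩ := Submodule.mem_span_singleton.1 hg
      exact ⟨c, ((Submodule.Quotient.eq _).2 (by simpa using hw)).symm⟩
  rw [h_eigen, h_coinv, finrank_bot]
  exact ⟨inferInstance, Module.finite_of_finrank_eq_succ h_coinv, rfl⟩

end SchwartzModuleExcess

section AbelianGroupRepresentations

lemma finite_of_isSimpleModule (k A M : Type*) [Field k] [CommRing A] [Algebra k A]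
    [Algebra.FiniteType k A] [AddCommGroup M] [Module A M] [Module k M] [IsScalarTower k A M]
    [IsSimpleModule A M] : Module.Finite k M := by
  obtain ⟨I, hI, ⟨e⟩⟩ := isSimpleModule_iff_quot_maximal.1 ‹IsSimpleModule A M›
  let := Ideal.Quotient.field I
  have := finite_of_finite_type_of_isJacobsonRing k (A ⧸ I)
  exact Module.Finite.equiv (e.restrictScalars k).symm

lemma isIrreducible_of_irred {G : Type*} [Monoid G] {V : Type*} [AddCommGroup V] [Module ℂ V]
    {τ : Representation ℂ G V} (hτ : GRep.Irred τ) : τ.IsIrreducible where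
  exists_pair_ne :=
    have := hτ.1
    ⟨⊥, ⊤, fun h => bot_ne_top (congrArg Subrepresentation.toSubmodule h)⟩
  eq_bot_or_eq_top U := (hτ.2 U.toSubmodule fun g _ hv => U.apply_mem_toSubmodule g hv).imp
    (fun h => Subrepresentation.toSubmodule_injective h)
    (fun h => Subrepresentation.toSubmodule_injective h)

lemma finrank_eq_one_of_irred {G : Type*} [CommGroup G] [Group.FG G] {V : Type*} [AddCommGroup V]
    [Module ℂ V] {τ : Representation ℂ G V} (hτ : GRep.Irred τ) : Module.finrank ℂ V = 1 := by
  have : τ.IsIrreducible := isIrreducible_of_irred hτ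
  have : Module.Finite ℂ V := finite_of_isSimpleModule ℂ (MonoidAlgebra ℂ G) τ.asModule
  exact Representation.IsIrreducible.finrank_eq_one_of_isMulCommutative τ

variable {G : Type*} [CommGroup G] [TopologicalSpace G] {V : Type*} [AddCommGroup V] [Module ℂ V]
  {τ : Representation ℂ G V}

lemma IsSmooth.isOpen_ker_of_irred [ContinuousMul G] (hτ : IsSmooth τ) (h_irred : GRep.Irred τ) :
    IsOpen (τ.ker : Set G) := by
  have := h_irred.1
  obtain ⟨v, hv⟩ := exists_ne (0 : V)
  refine Subgroup.isOpen_mono (H₁ := vectorStabilizer τ v) (fun g hg => ?_) (hτ v)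
  have h_comm : GRep.Equivariant τ τ (τ g - 1) := fun h w => by
    simp only [LinearMap.sub_apply, Module.End.one_apply, map_sub]
    rw [← Module.End.mul_apply, ← Module.End.mul_apply, ← map_mul, ← map_mul, mul_comm]
  have hv_mem : v ∈ LinearMap.ker (τ g - 1) := sub_eq_zero.2 hg
  have h_top := (h_irred.2 _ (GRep.ker_invariant τ τ _ h_comm)).resolve_left
    ((Submodule.ne_bot_iff _).2 ⟨v, hv_mem, hv⟩)
  exact sub_eq_zero.1 (LinearMap.ker_eq_top.1 h_top)

lemma IsSmooth.exists_isOpen_forall_apply_eq_smul [ContinuousMul G] (hτ : IsSmooth τ)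
    (h_irred : GRep.Irred τ) (h_rank : Module.finrank ℂ V = 1) :
    ∃ χ : G →* ℂˣ, IsOpen {g | χ g = 1} ∧ ∀ g v, τ g v = (χ g : ℂ) • v := by
  let χ : G →* ℂˣ := (LinearMap.det.comp τ).toHomUnits
  refine ⟨χ, ?_, fun g v => ?_⟩
  · refine Subgroup.isOpen_mono (H₁ := τ.ker) (H₂ := χ.ker) (fun g hg => ?_)
      (hτ.isOpen_ker_of_irred h_irred)
    refine Units.ext ?_
    change LinearMap.det (τ g) = 1
    rw [MonoidHom.mem_ker.1 hg, map_one]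
  · change τ g v = LinearMap.det (τ g) • v
    obtain ⟨c, hc, -⟩ := LinearMap.existsUnique_eq_smul_id_of_finrank_eq_one h_rank (τ g)
    simp [hc, h_rank]

lemma group_fg_quotient [IsTopologicalGroup G] {N U : Subgroup G} (hN : IsCompact (N : Set G))
    {g : G} (hg : N ⊔ Subgroup.zpowers g = ⊤) (hU : IsOpen (U : Set G)) : Group.FG (G ⧸ U) := by
  have := QuotientGroup.discreteTopology hU
  have h_fin : (QuotientGroup.mk (s := U) '' N).Finite :=
    (hN.image QuotientGroup.continuous_mk).finite_of_discrete
  refine Group.fg_iff.2 ⟨insert (g : G ⧸ U) (QuotientGroup.mk '' N), ?_, h_fin.insert _⟩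
  rw [eq_top_iff, ← Subgroup.map_top_of_surjective _ (QuotientGroup.mk'_surjective U), ← hg,
    Subgroup.map_le_iff_le_comap]
  refine sup_le (fun n hn => ?_) (Subgroup.zpowers_le.2 ?_)
  · exact Subgroup.subset_closure (Set.mem_insert_of_mem _ ⟨n, hn, rfl⟩)
  · exact Subgroup.subset_closure (Set.mem_insert _ _)

theorem IsSmooth.finrank_eq_one_of_irred [IsTopologicalGroup G] {N : Subgroup G}
    (hN : IsCompact (N : Set G)) {g : G} (hg : N ⊔ Subgroup.zpowers g = ⊤) (hτ : IsSmooth τ)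
    (h_irred : GRep.Irred τ) :
    Module.finrank ℂ V = 1 := by
  have := group_fg_quotient hN hg (hτ.isOpen_ker_of_irred h_irred)
  let σ : Representation ℂ (G ⧸ τ.ker) V := QuotientGroup.lift τ.ker τ fun _ h => h
  have hσ : GRep.Irred σ := ⟨h_irred.1, fun U hU => h_irred.2 U fun g v hv => hU g v hv⟩
  exact PSW.finrank_eq_one_of_irred hσ

end AbelianGroupRepresentations

section Irreducible

variable {K : Type*} [NontriviallyNormedField K] {V : Type*} [AddCommGroup V] [Module ℂ V]
  {ρ : Rep K V} {ψ : AddChar K ℂ}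

lemma irred_comp_xTHom (h_irred : GRep.Irred ρ) (h_inv : sInv ρ = ⊤) :
    GRep.Irred (ρ.comp Aff.xTHom) := by
  refine ⟨h_irred.1, fun U hU => h_irred.2 U fun g v hv => ?_⟩
  have h_fix : ρ (Aff.xT g.t) v ∈ sInv ρ := h_inv ▸ Submodule.mem_top
  rw [apply_eq_apply_sS_apply_xT, h_fix]
  exact hU g.t v hv

lemma not_iso_SRep_of_sInv_eq_top (hψ : IsLocallyConstant ψ) (hψ1 : ψ ≠ 1) [Nontrivial V]
    (h_inv : sInv ρ = ⊤) : ¬ GRep.Iso ρ (SRep ψ hψ) := by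
  rintro ⟨e, he⟩
  obtain ⟨v, hv⟩ := exists_ne (0 : V)
  have h_fix : v ∈ sInv ρ := h_inv ▸ Submodule.mem_top
  have h_mem : e v ∈ sInv (SRep ψ hψ) := fun b => by rw [← he, h_fix]
  rw [sInv_SRep hψ hψ1, Submodule.mem_bot] at h_mem
  exact hv (e.map_eq_zero_iff.1 h_mem)

variable [IsUltrametricDist K] [ProperSpace K]

theorem finrank_eq_one_of_irred_of_sInv_eq_top (hρ : IsSmoothRep ρ) (h_irred : GRep.Irred ρ)
    (h_inv : sInv ρ = ⊤) : Module.finrank ℂ V = 1 := by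
  obtain ⟨ϖ, hϖ⟩ := exists_normOneUnits_sup_zpowers_eq_top K
  exact (isSmooth_comp_xTHom hρ).finrank_eq_one_of_irred (isCompact_normOneUnits K) hϖ
    (irred_comp_xTHom h_irred h_inv)

theorem exists_tEigen_eq_top_of_irred (hρ : IsSmoothRep ρ) (h_irred : GRep.Irred ρ)
    (h_inv : sInv ρ = ⊤) : ∃ χ : Kˣ →* ℂˣ, SmoothMulChar χ ∧ tEigen ρ χ = ⊤ := by
  obtain ⟨χ, hχ, h⟩ := (isSmooth_comp_xTHom hρ).exists_isOpen_forall_apply_eq_smul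
    (irred_comp_xTHom h_irred h_inv) (finrank_eq_one_of_irred_of_sInv_eq_top hρ h_irred h_inv)
  exact ⟨χ, hχ, eq_top_iff.2 fun v _ u => h u v⟩

theorem hasCoinvariantExcess_of_irred (hρ : IsSmoothRep ρ) (hψ : IsLocallyConstant ψ)
    (hψ1 : ψ ≠ 1) {χ : Kˣ →* ℂˣ} (hχ : SmoothMulChar χ) (h_irred : GRep.Irred ρ) :
    HasCoinvariantExcess (twist (ρ.comp Aff.xTHom) χ)
      (if GRep.Iso ρ (SRep ψ hψ) then 1 else 0) := by
  by_cases h_inv : sInv ρ = ⊤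
  · have := h_irred.1
    have := Module.finite_of_finrank_eq_succ
      (finrank_eq_one_of_irred_of_sInv_eq_top hρ h_irred h_inv)
    obtain ⟨ϖ, hϖ⟩ := exists_normOneUnits_sup_zpowers_eq_top K
    rw [if_neg (not_iso_SRep_of_sInv_eq_top hψ hψ1 h_inv)]
    exact hasCoinvariantExcess_zero_of_finite (isCompact_normOneUnits K) hϖ
      (isSmooth_twist_comp_xTHom hρ hχ)
  · have h_iso := iso_SRep_of_irred hρ hψ hψ1 h_irred h_inv
    have h_isoT : GRep.Iso (ρ.comp Aff.xTHom) ((SRep ψ hψ).comp Aff.xTHom) := by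
      obtain ⟨e, he⟩ := h_iso
      exact ⟨e, fun u => he (Aff.xT u)⟩
    rw [if_pos h_iso]
    exact (hasCoinvariantExcess_SRep hψ hψ1 hχ).of_iso (h_isoT.twist χ)

end Irreducible

section CompositionSeries

section Irreducibility

variable {G : Type*} [Monoid G] {V : Type*} [AddCommGroup V] [Module ℂ V]
  {ρ : Representation ℂ G V}

lemma invariant_inf {A B : Submodule ℂ V} (hA : GRep.Invariant ρ A) (hB : GRep.Invariant ρ B) :
    GRep.Invariant ρ (A ⊓ B) :=
  fun g v hv => ⟨hA g v hv.1, hB g v hv.2⟩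

lemma invariant_sup {A B : Submodule ℂ V} (hA : GRep.Invariant ρ A) (hB : GRep.Invariant ρ B) :
    GRep.Invariant ρ (A ⊔ B) := fun g =>
  sup_le (c := (A ⊔ B).comap (ρ g)) (fun _ ha => Submodule.mem_sup_left (hA g _ ha))
    (fun _ hb => Submodule.mem_sup_right (hB g _ hb))

lemma irred_sub {A : Submodule ℂ V} (hA : GRep.Invariant ρ A) (h_ne : A ≠ ⊥)
    (h_min : ∀ C, GRep.Invariant ρ C → C ≤ A → C ≠ ⊥ → C = A) :
    GRep.Irred (GRep.sub ρ hA) := by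
  refine ⟨Submodule.nontrivial_iff_ne_bot.2 h_ne, fun U hU => or_iff_not_imp_left.2 fun hU_ne => ?_⟩
  have h_map := h_min (U.map A.subtype)
    (GRep.map_invariant (GRep.sub ρ hA) ρ A.subtype (fun _ _ => rfl) U hU)
    (Submodule.map_subtype_le A U)
    fun h => hU_ne (Submodule.map_injective_of_injective A.injective_subtype
      (h.trans (Submodule.map_bot _).symm))
  exact Submodule.map_injective_of_injective A.injective_subtype
    (h_map.trans (Submodule.map_subtype_top A).symm)

lemma irred_subquot {A B : Submodule ℂ V} (hA : GRep.Invariant ρ A) (hB : GRep.Invariant ρ B)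
    (h_lt : A < B)
    (h_max : ∀ C, GRep.Invariant ρ C → A ≤ C → C ≤ B → C = A ∨ C = B) :
    GRep.Irred (GRep.subquot ρ hA hB) := by
  let π := (A.comap B.subtype).mkQ
  refine ⟨Submodule.Quotient.nontrivial_iff.2 fun h => h_lt.not_ge
    (Submodule.comap_subtype_eq_top.1 h), fun U hU => ?_⟩
  have h_comap : Function.Injective fun U : Submodule ℂ _ => (U.comap π).map B.subtype :=
    (Submodule.map_injective_of_injective B.injective_subtype).comp
      (Submodule.comap_injective_of_surjective (Submodule.mkQ_surjective _))
  have h_bot : ((⊥ : Submodule ℂ _).comap π).map B.subtype = A := by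
    rw [← LinearMap.ker, Submodule.ker_mkQ, Submodule.map_comap_subtype, inf_eq_right.2 h_lt.le]
  have h_top : ((⊤ : Submodule ℂ _).comap π).map B.subtype = B := by
    rw [Submodule.comap_top, Submodule.map_subtype_top]
  have h_inv : GRep.Invariant ρ ((U.comap π).map B.subtype) :=
    GRep.map_invariant (GRep.sub ρ hB) ρ B.subtype (fun _ _ => rfl) _ fun g v hv => hU g _ hv
  have h_le : A ≤ (U.comap π).map B.subtype :=
    h_bot.ge.trans (Submodule.map_mono (Submodule.comap_mono bot_le))
  exact (h_max _ h_inv h_le (Submodule.map_subtype_le _ _)).imp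
    (fun h => h_comap (h.trans h_bot.symm)) (fun h => h_comap (h.trans h_top.symm))

end Irreducibility

section FiniteLength

variable {K : Type*} [Field K] {V : Type*} [AddCommGroup V] [Module ℂ V] {ρ : Rep K V}

lemma CompSeries.eq_inf_of_le_inf (c : CompSeries ρ) {A : Submodule ℂ V} {i : ℕ} (hi : i < c.n)
    (h_bot : c.W i ⊓ A = ⊥) {C : Submodule ℂ V} (hC : GRep.Invariant ρ C)
    (hCA : C ≤ c.W (i + 1) ⊓ A) (hC_ne : C ≠ ⊥) : C = c.W (i + 1) ⊓ A := by
  obtain ⟨hCW, hCA'⟩ := le_inf_iff.1 hCA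
  have h_sup : c.W i ⊔ C = c.W (i + 1) := by
    refine (c.maximal i hi _ (invariant_sup (c.inv i) hC) le_sup_left
      (sup_le (c.lt i hi).le hCW)).resolve_left fun h => hC_ne ?_
    exact le_bot_iff.1 (h_bot ▸ le_inf (sup_eq_left.1 h) hCA')
  rw [← h_sup, sup_comm, sup_inf_assoc_of_le (c.W i) hCA', h_bot, sup_bot_eq]

theorem CompSeries.exists_irred_sub_of_ne_bot (c : CompSeries ρ) {A : Submodule ℂ V}
    (hA : GRep.Invariant ρ A) (h_ne : A ≠ ⊥) :
    ∃ (B : Submodule ℂ V) (hB : GRep.Invariant ρ B), B ≤ A ∧ GRep.Irred (GRep.sub ρ hB) := by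
  have h_exists : ∃ i < c.n, c.W i ⊓ A = ⊥ ∧ c.W (i + 1) ⊓ A ≠ ⊥ := by
    by_contra! h
    have h_all (i : ℕ) (hi : i ≤ c.n) : c.W i ⊓ A = ⊥ := by
      induction i with
      | zero => rw [c.bot, bot_inf_eq]
      | succ i ih => exact h i hi (ih (Nat.le_of_succ_le hi))
    exact h_ne (by simpa only [c.top, top_inf_eq] using h_all c.n le_rfl)
  obtain ⟨i, hi, h_bot, h_ne⟩ := h_exists
  have hB := invariant_inf (c.inv (i + 1)) hA
  exact ⟨_, hB, inf_le_right, irred_sub hB h_ne fun C hC => c.eq_inf_of_le_inf hi h_bot hC⟩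

end FiniteLength

variable {K : Type*} [NontriviallyNormedField K] [IsUltrametricDist K] [ProperSpace K]
  {V : Type*} [AddCommGroup V] [Module ℂ V] {ρ : Rep K V} {ψ : AddChar K ℂ}

theorem Perfect.sInv_eq_bot (hρ : IsSmoothRep ρ) (c : CompSeries ρ) (h : Perfect ρ) :
    sInv ρ = ⊥ := by
  by_contra h_ne
  obtain ⟨B, hB, hB_le, h_irred⟩ := c.exists_irred_sub_of_ne_bot (sInv_invariant ρ) h_ne
  have hB_inv : sInv (GRep.sub ρ hB) = ⊤ :=
    eq_top_iff.2 fun v _ b => Subtype.ext (hB_le v.2 b)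
  obtain ⟨χ, hχ, h_eigen⟩ := exists_tEigen_eq_top_of_irred (isSmoothRep_sub hρ hB) h_irred hB_inv
  have := h_irred.1
  obtain ⟨v, hv⟩ := exists_ne (0 : B)
  have hv_eigen : v ∈ tEigen (GRep.sub ρ hB) χ := h_eigen ▸ Submodule.mem_top
  have hv_mem : (v : V) ∈ tEigen ρ χ := fun u => congrArg Subtype.val (hv_eigen u)
  rw [h χ hχ] at hv_mem
  exact hv (Subtype.ext hv_mem)

lemma hasCoinvariantExcess_sub_of_subquot (hρ : IsSmoothRep ρ) {χ : Kˣ →* ℂˣ}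
    (hχ : SmoothMulChar χ) {A B : Submodule ℂ V} (hA : GRep.Invariant ρ A)
    (hB : GRep.Invariant ρ B) (h_le : A ≤ B) {m n : ℕ}
    (hm : HasCoinvariantExcess (twist ((GRep.sub ρ hA).comp Aff.xTHom) χ) m)
    (hn : HasCoinvariantExcess (twist ((GRep.subquot ρ hA hB).comp Aff.xTHom) χ) n) :
    HasCoinvariantExcess (twist ((GRep.sub ρ hB).comp Aff.xTHom) χ) (m + n) := by
  obtain ⟨ϖ, hϖ⟩ := exists_normOneUnits_sup_zpowers_eq_top K
  have hA_smooth := isSmooth_twist_comp_xTHom (isSmoothRep_sub hρ hA) hχ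
  have hB_smooth := isSmooth_twist_comp_xTHom (isSmoothRep_sub hρ hB) hχ
  have h_quot_smooth : IsSmooth (twist ((GRep.subquot ρ hA hB).comp Aff.xTHom) χ) :=
    isSmooth_twist_comp_xTHom (isSmoothRep_quot (isSmoothRep_sub hρ hB) _) hχ
  have h_incl : GRep.Equivariant (twist ((GRep.sub ρ hA).comp Aff.xTHom) χ)
      (twist ((GRep.sub ρ hB).comp Aff.xTHom) χ) (Submodule.inclusion h_le) := fun _ _ => rfl
  have h_mkQ : GRep.Equivariant (twist ((GRep.sub ρ hB).comp Aff.xTHom) χ)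
      (twist ((GRep.subquot ρ hA hB).comp Aff.xTHom) χ) (A.comap B.subtype).mkQ :=
    fun _ _ => rfl
  have h_exact : Function.Exact (Submodule.inclusion h_le) (A.comap B.subtype).mkQ := by
    rw [LinearMap.exact_iff, Submodule.ker_mkQ, Submodule.range_inclusion]
  exact HasCoinvariantExcess.of_exact (isCompact_normOneUnits K) hϖ hA_smooth hB_smooth
    h_quot_smooth h_incl h_mkQ (Submodule.inclusion_injective h_le) h_exact
    (Submodule.mkQ_surjective _) hm hn

theorem CompSeries.hasCoinvariantExcess (hρ : IsSmoothRep ρ) (c : CompSeries ρ)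
    (hψ : IsLocallyConstant ψ) (hψ1 : ψ ≠ 1) {χ : Kˣ →* ℂˣ} (hχ : SmoothMulChar χ) :
    HasCoinvariantExcess (twist (ρ.comp Aff.xTHom) χ) (c.deg (SRep ψ hψ)) := by
  have h_sub (i : ℕ) (hi : i ≤ c.n) :
      HasCoinvariantExcess (twist ((GRep.sub ρ (c.inv i)).comp Aff.xTHom) χ)
        (∑ j ∈ Finset.range i,
          if GRep.Iso (GRep.subquot ρ (c.inv j) (c.inv (j + 1))) (SRep ψ hψ) then 1 else 0) := by
    induction i with
    | zero =>
      obtain ⟨ϖ, hϖ⟩ := exists_normOneUnits_sup_zpowers_eq_top K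
      have : Module.Finite ℂ (c.W 0) := by
        rw [c.bot]
        infer_instance
      exact hasCoinvariantExcess_zero_of_finite (isCompact_normOneUnits K) hϖ
        (isSmooth_twist_comp_xTHom (isSmoothRep_sub hρ _) hχ)
    | succ i ih =>
      rw [Finset.sum_range_succ]
      refine hasCoinvariantExcess_sub_of_subquot hρ hχ (c.inv i) (c.inv (i + 1)) (c.lt i hi).le
        (ih (Nat.le_of_succ_le hi)) ?_
      exact hasCoinvariantExcess_of_irred (isSmoothRep_quot (isSmoothRep_sub hρ _) _) hψ hψ1 hχ
        (irred_subquot (c.inv i) (c.inv (i + 1)) (c.lt i hi) (c.maximal i hi))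
  rw [CompSeries.deg, Finset.card_filter, ← Finset.sum_range
    fun j => if GRep.Iso (GRep.subquot ρ (c.inv j) (c.inv (j + 1))) (SRep ψ hψ) then 1 else 0]
  have h_iso : GRep.Iso (ρ.comp Aff.xTHom) ((GRep.sub ρ (c.inv c.n)).comp Aff.xTHom) :=
    ⟨(LinearEquiv.ofTop _ c.top).symm, fun _ _ => rfl⟩
  exact (h_sub c.n le_rfl).of_iso (h_iso.twist χ)

end CompositionSeries

section Statements

open Aff

variable {K : Type*} [NontriviallyNormedField K] [IsUltrametricDist K] [ProperSpace K]

theorem statement8_general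
    (ψ : AddChar K ℂ) (hψlc : IsLocallyConstant (⇑ψ)) (hψne : ψ ≠ 1)
    {V : Type*} [AddCommGroup V] [Module ℂ V]
    (ρ : Rep K V) (hρ : IsSmoothRep ρ) (c : CompSeries ρ) :
    (Perfect ρ ↔ sInv ρ = ⊥) ∧
    (Perfect ρ ↔ ∀ χ : Kˣ →* ℂˣ, SmoothMulChar χ →
      Module.Finite ℂ (V ⧸ tTwistKer ρ χ) ∧
      Module.finrank ℂ (V ⧸ tTwistKer ρ χ) = c.deg (SRep ψ hψlc)) := by
  refine ⟨⟨Perfect.sInv_eq_bot hρ c, fun h χ _ => le_bot_iff.1 (h ▸ tEigen_le_sInv hρ χ)⟩,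
    forall₂_congr fun χ hχ => ?_⟩
  obtain ⟨_, h_coinv, h_finrank⟩ := c.hasCoinvariantExcess hρ hψlc hψne hχ
  rw [tEigen_eq_grpInv, tTwistKer_eq_grpCoinvKer, and_iff_right h_coinv, h_finrank,
    Nat.add_eq_right, Submodule.finrank_eq_zero]

theorem statement8
    (hchar : (2 : K) ≠ 0)
    (ψ : AddChar K ℂ) (hψlc : IsLocallyConstant (⇑ψ)) (hψne : ψ ≠ 1)
    {V : Type*} [AddCommGroup V] [Module ℂ V]
    (ρ : Rep K V) (hρ : IsSmoothRep ρ) (c : CompSeries ρ) :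
    (Perfect ρ ↔ sInv ρ = ⊥) ∧
    (Perfect ρ ↔ ∀ χ : Kˣ →* ℂˣ, SmoothMulChar χ →
      Module.Finite ℂ (V ⧸ tTwistKer ρ χ) ∧
      Module.finrank ℂ (V ⧸ tTwistKer ρ χ) = c.deg (SRep ψ hψlc)) :=
  statement8_general ψ hψlc hψne ρ hρ c

end Statements

end PSW
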